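/- arXiv:2604.05245 — 2 statements merged into one kernel-verified Lean document; each statement's English description precedes it below -/
import Mathlib

section
/- Assume 0 < γ ≤ 1 (and γ < p). There exists a constant c₊ > 0, depending only on N, p, γ and λ₊, such that for every open bounded Ω ⊆ ℝ^N, every local minimizer u of J on Ω, every point x₀ ∈ Ω belonging to the closure of {x ∈ Ω : u(x) > 0}, and every 0 < r < dist(x₀, ∂Ω), one has sup_{B_r(x₀)} max(u, 0) ≥ c₊ r^{1+τ}. Analogously, there exists c₋ > 0 depending only on N, p, γ, λ₋ such that sup_{B_r(x₀)} max(−u, 0) ≥ c₋ r^{1+τ} whenever x₀ lies in the closure of {x ∈ Ω : u(x) < 0} and 0 < r < dist(x₀, ∂Ω). -/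
open MeasureTheory Metric Set
open scoped InnerProductSpace

/-- The Alt–Phillips potential `F_γ(t) = λ₊ (t₊)^γ + λ₋ (t₋)^γ`. -/
noncomputable def Fgam (γ lp lm : ℝ) (t : ℝ) : ℝ :=
  lp * (max t 0) ^ γ + lm * (max (-t) 0) ^ γ

/-- `u` is a `C¹(Ω)` function with `∫_Ω ‖∇u‖^p < ∞` which is a local minimizer of the
functional with density `‖∇v‖^p/p + F(v)`, with respect to Lipschitz competitors on
balls compactly contained in `Ω` agreeing with `u` on the boundary sphere. -/
def APLocMin (N : ℕ) (p : ℝ) (F : ℝ → ℝ) (Ω : Set (EuclideanSpace ℝ (Fin N)))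
    (u : EuclideanSpace ℝ (Fin N) → ℝ) : Prop :=
  (∀ x ∈ Ω, DifferentiableAt ℝ u x) ∧
  ContinuousOn (fun x => gradient u x) Ω ∧
  IntegrableOn (fun x => ‖gradient u x‖ ^ p) Ω volume ∧
  ∀ (z : EuclideanSpace ℝ (Fin N)) (r : ℝ), 0 < r → closure (Metric.ball z r) ⊆ Ω →
    ∀ (v : EuclideanSpace ℝ (Fin N) → ℝ) (K : NNReal),
      LipschitzOnWith K v (closure (Metric.ball z r)) →
      Set.EqOn v u (Metric.sphere z r) →
      (∫ x in Metric.ball z r, (‖gradient u x‖ ^ p / p + F (u x))) ≤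
        ∫ x in Metric.ball z r, (‖gradient v x‖ ^ p / p + F (v x))

/-!
Let `u y > 0` and let `M` bound `u` on a ball of radius `ρ` around `y`. If `q` is conjugate to `p`,
the radial power `w x = M (‖x - y‖ / ρ)^q` has the linear `p`-flux
`‖∇w‖^{p-2} ∇w = b (x - y)`, of constant divergence `N b`, and `u ≤ w` on the boundary sphere, so
`min u w` is an admissible competitor. Convexity of `‖ξ‖^p`, concavity of `t^γ` on `[0, M]`, where
the slopes are at least `κ = λ γ M^{γ-1}`, and an integration by parts of the flux against
`(u - w)₊` turn minimality into `(κ - N b) ∫ (u - w)₊ ≤ 0`. Since `u y > 0 = w y`, the integral is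
positive and `κ ≤ N b = N (q M)^{p-1} / ρ^p`, that is, `M` is at least a constant multiple of
`ρ^{p/(p-γ)} = ρ^{1+τ}`. A point `x₀` in the closure of the positive phase has such a `y` within
`r / 2`, and the negative phase of `u` is the positive phase of `-u`.
-/

section NormedSpace

theorem inter_frontier_nonempty_of_isPreconnected {X : Type*} [TopologicalSpace X] {s U : Set X}
    (hs : IsPreconnected s) (hU : IsOpen U) (hsU : (s ∩ U).Nonempty) (hnot : ¬s ⊆ U) :
    (s ∩ frontier U).Nonempty := by
  by_contra hempty
  refine hnot (hs.subset_of_closure_inter_subset hU hsU fun w ⟨hwU, hws⟩ => ?_)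
  by_contra hw
  exact hempty ⟨w, hws, hU.frontier_eq ▸ ⟨hwU, hw⟩⟩

variable {E : Type*} [NormedAddCommGroup E] [NormedSpace ℝ E]

theorem closedBall_subset_of_lt_infDist_frontier {U : Set E} (hU : IsOpen U) {x : E} (hx : x ∈ U)
    {r : ℝ} (hr : 0 ≤ r) (hrU : r < infDist x (frontier U)) : closedBall x r ⊆ U := by
  by_contra hnot
  obtain ⟨w, hwx, hwU⟩ := inter_frontier_nonempty_of_isPreconnected
    (convex_closedBall x r).isPreconnected hU ⟨x, mem_closedBall_self hr, hx⟩ hnot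
  exact (hrU.trans_le (infDist_le_dist_of_mem hwU)).not_ge (mem_closedBall'.1 hwx)

theorem lipschitzWith_indicator_of_eq_zero_on_frontier {F : Type*} [SeminormedAddCommGroup F]
    {f : E → F} {K : NNReal} {U : Set E} (hU : IsOpen U) (hf : LipschitzOnWith K f (closure U))
    (hf0 : ∀ x ∈ frontier U, f x = 0) : LipschitzWith K (U.indicator f) := by
  have mixed : ∀ x ∈ U, ∀ z ∉ U, dist (f x) 0 ≤ K * dist x z := by
    intro x hx z hz
    obtain ⟨w, hw, hwU⟩ := inter_frontier_nonempty_of_isPreconnected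
      (convex_segment x z).isPreconnected hU ⟨x, left_mem_segment ℝ x z, hx⟩
      fun h => hz (h (right_mem_segment ℝ x z))
    calc dist (f x) 0 = dist (f x) (f w) := by rw [hf0 w hwU]
      _ ≤ K * dist x w := hf.dist_le_mul x (subset_closure hx) w (frontier_subset_closure hwU)
      _ ≤ K * dist x z := by
        gcongr
        linarith [dist_add_dist_of_mem_segment hw, dist_nonneg (x := w) (y := z)]
  refine LipschitzWith.of_dist_le_mul fun x z => ?_
  by_cases hx : x ∈ U <;> by_cases hz : z ∈ U
  · simpa only [indicator_of_mem hx, indicator_of_mem hz] using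
      hf.dist_le_mul x (subset_closure hx) z (subset_closure hz)
  · simpa only [indicator_of_mem hx, indicator_of_notMem hz] using mixed x hx z hz
  · simpa only [indicator_of_notMem hx, indicator_of_mem hz, dist_comm] using mixed z hz x hx
  · simp only [indicator_of_notMem hx, indicator_of_notMem hz, dist_self]
    positivity

theorem fderiv_indicator_posPart {f : E → ℝ} {U : Set E} (hU : IsOpen U) (hf : ContinuousOn f U) :
    fderiv ℝ (U.indicator fun x => max (f x) 0) =
      {x ∈ U | 0 < f x}.indicator (fderiv ℝ f) := by
  have hopen : IsOpen {x ∈ U | 0 < f x} := hf.isOpen_inter_preimage hU isOpen_Ioi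
  have hnonneg : ∀ x, 0 ≤ U.indicator (fun x => max (f x) 0) x :=
    indicator_nonneg fun x _ => le_max_right _ _
  ext1 x
  by_cases hx : x ∈ {x ∈ U | 0 < f x}
  · rw [indicator_of_mem hx]
    refine Filter.EventuallyEq.fderiv_eq ?_
    filter_upwards [hopen.mem_nhds hx] with z hz
    rw [indicator_of_mem hz.1, max_eq_left hz.2.le]
  · rw [indicator_of_notMem hx]
    have hzero : U.indicator (fun x => max (f x) 0) x = 0 := by
      by_cases hxU : x ∈ U
      · rw [indicator_of_mem hxU]
        exact max_eq_right (not_lt.1 fun h => hx ⟨hxU, h⟩)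
      · exact indicator_of_notMem hxU _
    exact IsLocalMin.fderiv_eq_zero (.of_forall fun z => hzero.trans_le (hnonneg z))

end NormedSpace

section EulerField

theorem setIntegral_pos_of_isOpen {X : Type*} [TopologicalSpace X] [MeasurableSpace X]
    [OpensMeasurableSpace X] {μ : Measure X} [μ.IsOpenPosMeasure] {f : X → ℝ} {A : Set X}
    (hA : IsOpen A) (hne : A.Nonempty) (hinteg : IntegrableOn f A μ) (hpos : ∀ x ∈ A, 0 < f x) :
    0 < ∫ x in A, f x ∂μ := by
  have hsupp : A ⊆ Function.support f := fun x hx => (hpos x hx).ne'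
  rw [setIntegral_pos_iff_support_of_nonneg_ae
    (ae_restrict_of_forall_mem hA.measurableSet fun x hx => (hpos x hx).le) hinteg,
    inter_eq_right.2 hsupp]
  exact hA.measure_pos μ hne

theorem integrable_mul_fderiv_apply {E : Type*} [NormedAddCommGroup E] [NormedSpace ℝ E]
    [MeasurableSpace E] [OpensMeasurableSpace E] {μ : Measure E} [IsFiniteMeasureOnCompacts μ]
    {φ : E → ℝ} {C : NNReal} (hφ : LipschitzWith C φ) (hsupp : HasCompactSupport φ)
    {g : E → ℝ} (hg : Continuous g) (e : E) :
    Integrable (fun x => g x * fderiv ℝ φ x e) μ := by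
  have hcut : Integrable (fun x => (tsupport φ).indicator g x * fderiv ℝ φ x e) μ := by
    refine Integrable.mul_bdd (c := C * ‖e‖) ?_
      (measurable_fderiv_apply_const ℝ φ e).aestronglyMeasurable
      (.of_forall fun x => (fderiv ℝ φ x).le_of_opNorm_le (norm_fderiv_le_of_lipschitz ℝ hφ) e)
    rw [integrable_indicator_iff (isClosed_tsupport φ).measurableSet]
    exact hg.continuousOn.integrableOn_compact' hsupp (isClosed_tsupport φ).measurableSet
  refine hcut.congr (.of_forall fun x => ?_)
  by_cases hx : x ∈ tsupport φ
  · simp only [indicator_of_mem hx]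
  · simp [fderiv_of_notMem_tsupport ℝ hx]

variable {E : Type*} [NormedAddCommGroup E] [NormedSpace ℝ E] [FiniteDimensional ℝ E]
  [MeasurableSpace E] [BorelSpace E] {μ : Measure E} [μ.IsAddHaarMeasure]

theorem integral_coord_mul_fderiv_apply {φ : E → ℝ} {C : NNReal} (hφ : LipschitzWith C φ)
    (hsupp : HasCompactSupport φ) (l : E →L[ℝ] ℝ) (y e : E) :
    ∫ x, l (x - y) * fderiv ℝ φ x e ∂μ = -(l e * ∫ x, φ x ∂μ) := by
  have hl : LipschitzWith ‖l‖₊ fun x => l (x - y) := by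
    refine LipschitzWith.of_dist_le_mul fun a b => ?_
    simpa [dist_eq_norm, ← map_sub] using l.le_opNorm (a - b)
  have hline : ∀ x, lineDeriv ℝ (fun x => l (x - y)) x e = l e := fun x =>
    ((l.hasFDerivAt.comp x ((hasFDerivAt_id x).sub_const y)).hasLineDerivAt e).lineDeriv
  have hparts := hl.integral_lineDeriv_mul_eq (μ := μ) hφ hsupp e
  simp only [hline, integral_const_mul] at hparts
  rw [hparts, ← integral_neg]
  refine integral_congr_ae ?_
  filter_upwards [hφ.ae_differentiableAt (μ := μ)] with x hx
  rw [hx.lineDeriv_eq_fderiv, map_neg]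
  ring

theorem integral_fderiv_apply_sub {φ : E → ℝ} {C : NNReal} (hφ : LipschitzWith C φ)
    (hsupp : HasCompactSupport φ) (y : E) :
    ∫ x, fderiv ℝ φ x (x - y) ∂μ = -(Module.finrank ℝ E * ∫ x, φ x ∂μ) := by
  let B := Module.finBasis ℝ E
  let l : Fin (Module.finrank ℝ E) → E →L[ℝ] ℝ := fun i => (B.coord i).toContinuousLinearMap
  have hsum : ∀ x, fderiv ℝ φ x (x - y) = ∑ i, l i (x - y) * fderiv ℝ φ x (B i) := fun x => by
    conv_lhs => rw [← B.sum_repr (x - y)]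
    simp [l]
  calc ∫ x, fderiv ℝ φ x (x - y) ∂μ
      = ∑ i, ∫ x, l i (x - y) * fderiv ℝ φ x (B i) ∂μ := by
        simp_rw [hsum]
        exact integral_finsetSum _ fun i _ =>
          integrable_mul_fderiv_apply hφ hsupp ((l i).continuous.comp (by fun_prop)) (B i)
    _ = ∑ _i : Fin (Module.finrank ℝ E), -∫ x, φ x ∂μ := by
        refine Finset.sum_congr rfl fun i _ => ?_
        rw [integral_coord_mul_fderiv_apply hφ hsupp]
        simp [l]
    _ = -(Module.finrank ℝ E * ∫ x, φ x ∂μ) := by simp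

theorem setIntegral_fderiv_apply_sub_of_nonpos_on_frontier {f : E → ℝ} {K : NNReal} {U : Set E}
    (hU : IsOpen U) (hbdd : Bornology.IsBounded U) (hf : LipschitzOnWith K f (closure U))
    (hf0 : ∀ x ∈ frontier U, f x ≤ 0) (y : E) :
    ∫ x in {x ∈ U | 0 < f x}, fderiv ℝ f x (x - y) ∂μ =
      -(Module.finrank ℝ E * ∫ x in {x ∈ U | 0 < f x}, f x ∂μ) := by
  have hcont : ContinuousOn f U := hf.continuousOn.mono subset_closure
  have hmeas : MeasurableSet {x ∈ U | 0 < f x} :=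
    (hcont.isOpen_inter_preimage hU isOpen_Ioi).measurableSet
  let φ : E → ℝ := U.indicator fun x => max (f x) 0
  have hφ : LipschitzWith (1 * K) φ :=
    lipschitzWith_indicator_of_eq_zero_on_frontier hU
      ((LipschitzWith.id.max_const (0 : ℝ)).comp_lipschitzOnWith hf)
      fun x hx => max_eq_right (hf0 x hx)
  have hsupp : HasCompactSupport φ :=
    HasCompactSupport.of_support_subset_isCompact hbdd.isCompact_closure
      (support_indicator_subset.trans subset_closure)
  have hφf : φ = {x ∈ U | 0 < f x}.indicator f := by
    ext x
    by_cases hxU : x ∈ U <;> by_cases hx : 0 < f x <;> simp [φ, hxU, hx, le_of_lt, not_lt.1]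
  have hinteg := integral_fderiv_apply_sub (μ := μ) hφ hsupp y
  rw [fderiv_indicator_posPart hU hcont, hφf, integral_indicator hmeas] at hinteg
  rw [← hinteg, ← integral_indicator hmeas]
  congr 1 with x
  by_cases hx : x ∈ {x ∈ U | 0 < f x}
  · simp only [indicator_of_mem hx]
  · simp only [indicator_of_notMem hx, zero_apply]

end EulerField

section Gradient

variable {E : Type*} [NormedAddCommGroup E] [InnerProductSpace ℝ E]

theorem norm_rpow_div_add_inner_le {p : ℝ} (hp : 1 < p) (ξ η : E) :
    ‖η‖ ^ p / p + ⟪‖η‖ ^ (p - 2) • η, ξ - η⟫_ℝ ≤ ‖ξ‖ ^ p / p := by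
  rcases eq_or_ne η 0 with rfl | hη
  · simp only [norm_zero, Real.zero_rpow (zero_lt_one.trans hp).ne', smul_zero, inner_zero_left,
      zero_div, add_zero]
    positivity
  have hη' : 0 < ‖η‖ := norm_pos_iff.2 hη
  have hpq := Real.HolderConjugate.conjExponent hp
  have hself : ‖η‖ ^ (p - 2) * ⟪η, η⟫_ℝ = ‖η‖ ^ p := by
    rw [real_inner_self_eq_norm_sq, ← Real.rpow_add_natCast hη'.ne']
    norm_num
  have hdual : (‖η‖ ^ (p - 1)) ^ p.conjExponent = ‖η‖ ^ p := by
    rw [← Real.rpow_mul hη'.le, hpq.sub_one_mul_conj]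
  have hyoung : ‖η‖ ^ (p - 2) * ⟪η, ξ⟫_ℝ ≤ ‖ξ‖ ^ p / p + ‖η‖ ^ p / p.conjExponent :=
    calc ‖η‖ ^ (p - 2) * ⟪η, ξ⟫_ℝ ≤ ‖η‖ ^ (p - 2) * (‖η‖ * ‖ξ‖) := by
          gcongr
          exact real_inner_le_norm η ξ
      _ = ‖ξ‖ * ‖η‖ ^ (p - 1) := by
          rw [← mul_assoc, ← Real.rpow_add_one hη'.ne', mul_comm]
          ring_nf
      _ ≤ ‖ξ‖ ^ p / p + (‖η‖ ^ (p - 1)) ^ p.conjExponent / p.conjExponent :=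
          Real.young_inequality_of_nonneg (norm_nonneg ξ) (by positivity) hpq
      _ = _ := by rw [hdual]
  have hsplit : ‖η‖ ^ p / p + ‖η‖ ^ p / p.conjExponent = ‖η‖ ^ p := by
    rw [div_eq_mul_inv, div_eq_mul_inv, ← mul_add, hpq.inv_add_inv_eq_one, mul_one]
  rw [real_inner_smul_left, inner_sub_right, mul_sub, hself]
  linarith

/-- The radial power `a ‖x - y‖^q`. For `q` conjugate to `p` its `p`-Laplacian is constant, which
makes it the barrier against which local minimizers are compared. -/
noncomputable def radialBarrier (a q : ℝ) (y x : E) : ℝ := a * ‖x - y‖ ^ q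

theorem contDiff_radialBarrier {q : ℝ} (hq : 1 < q) (a : ℝ) (y : E) :
    ContDiff ℝ 1 (radialBarrier a q y) :=
  contDiff_const.mul ((contDiff_norm_rpow hq).comp (contDiff_id.sub contDiff_const))

variable [CompleteSpace E]

theorem contDiffOn_one_iff_continuousOn_gradient {u : E → ℝ} {Ω : Set E} (hΩ : IsOpen Ω) :
    ContDiffOn ℝ 1 u Ω ↔ DifferentiableOn ℝ u Ω ∧ ContinuousOn (gradient u) Ω := by
  have hfderiv : ContinuousOn (gradient u) Ω ↔ ContinuousOn (fderiv ℝ u) Ω := by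
    rw [← toDual_comp_gradient]
    exact ((InnerProductSpace.toDual ℝ E).toHomeomorph.comp_continuousOn_iff _ _).symm
  rw [← zero_add (1 : WithTop ℕ∞), contDiffOn_succ_iff_fderiv_of_isOpen hΩ, contDiffOn_zero,
    hfderiv]
  simp

theorem gradient_fun_neg (u : E → ℝ) (x : E) : gradient (fun z => -u z) x = -gradient u x := by
  simp only [gradient, fderiv_fun_neg, map_neg]

theorem gradient_min_of_lt {u w : E → ℝ} {x : E} (hu : ContinuousAt u x) (hw : ContinuousAt w x)
    (hlt : w x < u x) : gradient (fun z => min (u z) (w z)) x = gradient w x := by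
  refine Filter.EventuallyEq.gradient_eq ?_
  filter_upwards [hw.eventually_lt hu hlt] with z hz using min_eq_right hz.le

theorem gradient_min_of_le {u w : E → ℝ} {x : E} (hu : DifferentiableAt ℝ u x)
    (hmin : DifferentiableAt ℝ (fun z => min (u z) (w z)) x) (hle : u x ≤ w x) :
    gradient (fun z => min (u z) (w z)) x = gradient u x := by
  have htouch : IsLocalMin (fun z => u z - min (u z) (w z)) x :=
    .of_forall fun z => by simp [min_eq_left hle]
  have hfderiv := htouch.fderiv_eq_zero
  rw [fderiv_fun_sub hu hmin, sub_eq_zero] at hfderiv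
  rw [gradient, gradient, hfderiv]

/-- The density `‖∇u‖^p / p + F(u)` of the Alt–Phillips functional. -/
noncomputable def apDensity (p : ℝ) (F : ℝ → ℝ) (u : E → ℝ) (x : E) : ℝ :=
  ‖gradient u x‖ ^ p / p + F (u x)

theorem continuousOn_apDensity {p : ℝ} (hp : 0 ≤ p) {F : ℝ → ℝ} (hF : Continuous F) {u : E → ℝ}
    {Ω : Set E} (hΩ : IsOpen Ω) (hu : ContDiffOn ℝ 1 u Ω) : ContinuousOn (apDensity p F u) Ω :=
  ((((contDiffOn_one_iff_continuousOn_gradient hΩ).1 hu).2.norm.rpow_const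
    fun _ _ => .inr hp).div_const p).add (hF.comp_continuousOn hu.continuousOn)

theorem gradient_radialBarrier {q : ℝ} (hq : 1 < q) (a : ℝ) (y x : E) :
    gradient (radialBarrier a q y) x = (a * q * ‖x - y‖ ^ (q - 2)) • (x - y) := by
  refine HasGradientAt.gradient (hasGradientAt_iff_hasFDerivAt.2 ?_)
  refine (((hasFDerivAt_norm_rpow (x - y) hq).comp x
    ((hasFDerivAt_id x).sub_const y)).const_mul a).congr_fderiv ?_
  ext z
  simp
  ring

theorem flux_radialBarrier {p q : ℝ} (hpq : p.HolderConjugate q) {a : ℝ} (ha : 0 < a) (y x : E) :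
    ‖gradient (radialBarrier a q y) x‖ ^ (p - 2) • gradient (radialBarrier a q y) x =
      (a * q) ^ (p - 1) • (x - y) := by
  rw [gradient_radialBarrier hpq.symm.lt]
  rcases eq_or_ne x y with rfl | hxy
  · simp
  have hd : 0 < ‖x - y‖ := norm_sub_pos_iff.2 hxy
  have hc : 0 < a * q := mul_pos ha hpq.symm.pos
  have hnorm : ‖(a * q * ‖x - y‖ ^ (q - 2)) • (x - y)‖ = a * q * ‖x - y‖ ^ (q - 1) := by
    rw [norm_smul, Real.norm_of_nonneg (by positivity), mul_assoc, ← Real.rpow_add_one hd.ne']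
    ring_nf
  have hexp : (q - 1) * (p - 2) + (q - 2) = 0 := by linarith [hpq.mul_eq_add]
  rw [hnorm, smul_smul]
  congr 1
  calc (a * q * ‖x - y‖ ^ (q - 1)) ^ (p - 2) * (a * q * ‖x - y‖ ^ (q - 2))
      = ((a * q) ^ (p - 2) * (a * q)) * (‖x - y‖ ^ ((q - 1) * (p - 2)) * ‖x - y‖ ^ (q - 2)) := by
        rw [Real.mul_rpow hc.le (by positivity), ← Real.rpow_mul hd.le]
        ring
    _ = (a * q) ^ (p - 1) := by
        rw [← Real.rpow_add_one hc.ne', ← Real.rpow_add hd, hexp, Real.rpow_zero]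
        ring_nf

end Gradient

namespace Fgam

variable {γ lp lm : ℝ}

theorem neg (γ lp lm t : ℝ) : Fgam γ lp lm (-t) = Fgam γ lm lp t := by
  rw [Fgam, Fgam, neg_neg, add_comm]

theorem of_nonneg (hγ : γ ≠ 0) {t : ℝ} (ht : 0 ≤ t) : Fgam γ lp lm t = lp * t ^ γ := by
  simp [Fgam, ht, Real.zero_rpow hγ]

theorem continuous (hγ : 0 ≤ γ) : Continuous (Fgam γ lp lm) :=
  (((continuous_id.max continuous_const).rpow_const fun _ => .inr hγ).const_mul lp).add
    (((continuous_neg.max continuous_const).rpow_const fun _ => .inr hγ).const_mul lm)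

theorem mul_sub_le_sub (hγ0 : 0 < γ) (hγ1 : γ ≤ 1) (hlp : 0 ≤ lp) {s t M : ℝ} (hs : 0 ≤ s)
    (hst : s < t) (htM : t ≤ M) :
    lp * γ * M ^ (γ - 1) * (t - s) ≤ Fgam γ lp lm t - Fgam γ lp lm s := by
  have ht : 0 < t := hs.trans_lt hst
  have hslope : γ * t ^ (γ - 1) ≤ slope (fun x : ℝ => x ^ γ) s t :=
    (Real.concaveOn_rpow hγ0.le hγ1).le_slope_of_hasDerivAt hs ht.le hst
      (Real.hasDerivAt_rpow_const (.inl ht.ne'))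
  rw [slope_def_field, le_div_iff₀ (sub_pos.2 hst)] at hslope
  have hM : M ^ (γ - 1) ≤ t ^ (γ - 1) := Real.rpow_le_rpow_of_nonpos ht htM (sub_nonpos.2 hγ1)
  rw [of_nonneg hγ0.ne' ht.le, of_nonneg hγ0.ne' hs, ← mul_sub, mul_assoc, mul_assoc]
  refine mul_le_mul_of_nonneg_left (le_trans ?_ hslope) hlp
  rw [← mul_assoc]
  have := sub_pos.2 hst
  gcongr

end Fgam

section Comparison

theorem isOpen_setOf_mem_and_lt {X : Type*} [TopologicalSpace X] {U : Set X} {w u : X → ℝ}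
    (hU : IsOpen U) (hw : ContinuousOn w U) (hu : ContinuousOn u U) :
    IsOpen {x ∈ U | w x < u x} :=
  (hw.prodMk hu).isOpen_inter_preimage hU isOpen_lt_prod

theorem exists_lipschitzOnWith_min {E : Type*} [NormedAddCommGroup E] [NormedSpace ℝ E]
    {u w : E → ℝ} {s : Set E} (hu : ContDiffOn ℝ 1 u s) (hw : ContDiffOn ℝ 1 w s)
    (hconvex : Convex ℝ s) (hcompact : IsCompact s) :
    ∃ K, LipschitzOnWith K (fun x => min (u x) (w x)) s := by
  obtain ⟨Ku, hKu⟩ := hu.exists_lipschitzOnWith one_ne_zero hconvex hcompact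
  obtain ⟨Kw, hKw⟩ := hw.exists_lipschitzOnWith one_ne_zero hconvex hcompact
  exact ⟨_, lipschitzWith_min.comp_lipschitzOnWith (hKu.prodMk hKw)⟩

variable {E : Type*} [NormedAddCommGroup E] [InnerProductSpace ℝ E]

theorem mul_fderiv_sub_add_le_apDensity_sub [CompleteSpace E] {p b κ : ℝ} {F : ℝ → ℝ}
    {u w : E → ℝ} {x y : E} (hp : 1 < p) (hu : DifferentiableAt ℝ u x)
    (hw : DifferentiableAt ℝ w x)
    (hflux : ‖gradient w x‖ ^ (p - 2) • gradient w x = b • (x - y))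
    (hF : κ * (u x - w x) ≤ F (u x) - F (w x)) :
    b * fderiv ℝ (fun z => u z - w z) x (x - y) + κ * (u x - w x) ≤
      apDensity p F u x - apDensity p F w x := by
  have hinner : b * fderiv ℝ (fun z => u z - w z) x (x - y) =
      ⟪‖gradient w x‖ ^ (p - 2) • gradient w x, gradient u x - gradient w x⟫_ℝ := by
    rw [hflux, real_inner_smul_left, inner_sub_right, inner_gradient_right, inner_gradient_right,
      fderiv_fun_sub hu hw]
    simp
  have hconvex := norm_rpow_div_add_inner_le hp (gradient u x) (gradient w x)
  rw [hinner, apDensity, apDensity]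
  linarith

variable [FiniteDimensional ℝ E] [MeasurableSpace E] [BorelSpace E] {μ : Measure E}
  [μ.IsAddHaarMeasure]

theorem setIntegral_fderiv_apply_sub_of_nonpos_on_sphere {f : E → ℝ} {y : E} {ρ : ℝ} (hρ : ρ ≠ 0)
    (hf : ContDiffOn ℝ 1 f (closedBall y ρ)) (hf0 : ∀ x ∈ sphere y ρ, f x ≤ 0) :
    ∫ x in {x ∈ ball y ρ | 0 < f x}, fderiv ℝ f x (x - y) ∂μ =
      -(Module.finrank ℝ E * ∫ x in {x ∈ ball y ρ | 0 < f x}, f x ∂μ) := by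
  obtain ⟨K, hK⟩ := hf.exists_lipschitzOnWith one_ne_zero (convex_closedBall y ρ)
    (isCompact_closedBall y ρ)
  exact setIntegral_fderiv_apply_sub_of_nonpos_on_frontier isOpen_ball isBounded_ball
    (closure_ball y hρ ▸ hK) (frontier_ball y hρ ▸ hf0) y

theorem setIntegral_apDensity_min {p : ℝ} {F : ℝ → ℝ} {u w : E → ℝ} {U : Set E} {K : NNReal}
    (hU : IsOpen U) (hu : DifferentiableOn ℝ u U) (hw : ContinuousOn w U)
    (hmin : LipschitzOnWith K (fun z => min (u z) (w z)) U)
    (hinteg_u : IntegrableOn (apDensity p F u) U μ)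
    (hinteg_w : IntegrableOn (apDensity p F w) U μ) :
    ∫ x in U, apDensity p F (fun z => min (u z) (w z)) x ∂μ =
      ∫ x in {x ∈ U | w x < u x}, apDensity p F w x ∂μ +
        ∫ x in U \ {x ∈ U | w x < u x}, apDensity p F u x ∂μ := by
  set A := {x ∈ U | w x < u x}
  have hAU : A ⊆ U := sep_subset _ _
  have hdiff : ∀ᵐ x ∂μ.restrict U, DifferentiableAt ℝ (fun z => min (u z) (w z)) x := by
    filter_upwards [hmin.ae_differentiableWithinAt hU.measurableSet,
      ae_restrict_mem hU.measurableSet] with x hx hxU using hx.differentiableAt (hU.mem_nhds hxU)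
  have hmeas : MeasurableSet A := (isOpen_setOf_mem_and_lt hU hw hu.continuousOn).measurableSet
  have hon : apDensity p F w =ᵐ[μ.restrict A] apDensity p F fun z => min (u z) (w z) := by
    filter_upwards [ae_restrict_mem hmeas] with x hx
    have hxU := hU.mem_nhds (hAU hx)
    rw [apDensity, apDensity, gradient_min_of_lt (hu.continuousOn.continuousAt hxU)
      (hw.continuousAt hxU) hx.2, min_eq_right hx.2.le]
  have hoff : apDensity p F u =ᵐ[μ.restrict (U \ A)] apDensity p F fun z => min (u z) (w z) := by
    filter_upwards [ae_restrict_of_ae_restrict_of_subset sdiff_subset hdiff,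
      ae_restrict_mem (hU.measurableSet.diff hmeas)] with x hx hxA
    have hle : u x ≤ w x := not_lt.1 fun h => hxA.2 ⟨hxA.1, h⟩
    rw [apDensity, apDensity, gradient_min_of_le (hu.differentiableAt (hU.mem_nhds hxA.1)) hx hle,
      min_eq_left hle]
  rw [integral_congr_ae hon, integral_congr_ae hoff,
    ← setIntegral_union disjoint_sdiff_right (hU.measurableSet.diff hmeas)
      ((hinteg_w.mono_set hAU).congr hon) ((hinteg_u.mono_set sdiff_subset).congr hoff),
    union_sdiff_cancel hAU]

end Comparison

namespace APLocMin

variable {N : ℕ} {p : ℝ} {F : ℝ → ℝ} {Ω : Set (EuclideanSpace ℝ (Fin N))}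
  {u w : EuclideanSpace ℝ (Fin N) → ℝ} {y : EuclideanSpace ℝ (Fin N)} {ρ : ℝ}

theorem contDiffOn (hu : APLocMin N p F Ω u) (hΩ : IsOpen Ω) : ContDiffOn ℝ 1 u Ω :=
  (contDiffOn_one_iff_continuousOn_gradient hΩ).2
    ⟨fun x hx => (hu.1 x hx).differentiableWithinAt, hu.2.1⟩

theorem neg (hu : APLocMin N p F Ω u) : APLocMin N p (fun t => F (-t)) Ω (fun x => -u x) := by
  obtain ⟨hdiff, hgrad, hinteg, hmin⟩ := hu
  refine ⟨fun x hx => (hdiff x hx).fun_neg, ?_, ?_, fun z r hr hball v K hv hbdry => ?_⟩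
  · simpa only [gradient_fun_neg] using hgrad.fun_neg
  · simpa only [gradient_fun_neg, norm_neg] using hinteg
  · have hle := hmin z r hr hball (fun x => -v x) K hv.neg fun x hx => by simp [hbdry hx]
    simpa only [gradient_fun_neg, norm_neg, neg_neg] using hle

theorem setIntegral_superlevel_le (hu : APLocMin N p F Ω u) (hp : 0 ≤ p) (hF : Continuous F)
    (hΩ : IsOpen Ω) (hρ : 0 < ρ) (hball : closedBall y ρ ⊆ Ω) (hw : ContDiffOn ℝ 1 w Ω)
    (hbdry : ∀ x ∈ sphere y ρ, u x ≤ w x) :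
    ∫ x in {x ∈ ball y ρ | w x < u x}, apDensity p F u x ≤
      ∫ x in {x ∈ ball y ρ | w x < u x}, apDensity p F w x := by
  have hu1 := hu.contDiffOn hΩ
  have hballΩ : ball y ρ ⊆ Ω := ball_subset_closedBall.trans hball
  have hclosure : closure (ball y ρ) = closedBall y ρ := closure_ball y hρ.ne'
  have hinteg {v : EuclideanSpace ℝ (Fin N) → ℝ} (hv : ContDiffOn ℝ 1 v Ω) :
      IntegrableOn (apDensity p F v) (ball y ρ) :=
    (((continuousOn_apDensity hp hF hΩ hv).mono hball).integrableOn_compact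
      (isCompact_closedBall y ρ)).mono_set ball_subset_closedBall
  obtain ⟨K, hK⟩ := exists_lipschitzOnWith_min (hu1.mono hball) (hw.mono hball)
    (convex_closedBall y ρ) (isCompact_closedBall y ρ)
  have hle : ∫ x in ball y ρ, apDensity p F u x ≤
      ∫ x in ball y ρ, apDensity p F (fun z => min (u z) (w z)) x :=
    hu.2.2.2 y ρ hρ (hclosure ▸ hball) _ K (hclosure ▸ hK) fun x hx => min_eq_left (hbdry x hx)
  have hopen : IsOpen {x ∈ ball y ρ | w x < u x} :=
    isOpen_setOf_mem_and_lt isOpen_ball (hw.continuousOn.mono hballΩ)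
      (hu1.continuousOn.mono hballΩ)
  rw [setIntegral_apDensity_min isOpen_ball ((hu1.differentiableOn one_ne_zero).mono hballΩ)
    (hw.continuousOn.mono hballΩ) (hK.mono ball_subset_closedBall) (hinteg hu1) (hinteg hw)] at hle
  have hsplit := integral_inter_add_sdiff hopen.measurableSet (hinteg hu1)
  rw [inter_eq_right.2 (sep_subset _ _)] at hsplit
  linarith

theorem le_mul_of_flux_eq {b κ : ℝ} (hu : APLocMin N p F Ω u) (hp : 1 < p) (hF : Continuous F)
    (hΩ : IsOpen Ω) (hρ : 0 < ρ) (hball : closedBall y ρ ⊆ Ω) (hw : ContDiffOn ℝ 1 w Ω)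
    (hbdry : ∀ x ∈ sphere y ρ, u x ≤ w x)
    (hflux : ∀ x ∈ ball y ρ, ‖gradient w x‖ ^ (p - 2) • gradient w x = b • (x - y))
    (hFκ : ∀ x ∈ ball y ρ, w x < u x → κ * (u x - w x) ≤ F (u x) - F (w x))
    (hne : {x ∈ ball y ρ | w x < u x}.Nonempty) : κ ≤ N * b := by
  have hu1 := hu.contDiffOn hΩ
  have hf : ContDiffOn ℝ 1 (fun z => u z - w z) Ω := hu1.sub hw
  have hparts := setIntegral_fderiv_apply_sub_of_nonpos_on_sphere (μ := volume) hρ.ne'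
    (hf.mono hball) fun x hx => sub_nonpos.2 (hbdry x hx)
  simp only [sub_pos, finrank_euclideanSpace_fin] at hparts
  set A := {x ∈ ball y ρ | w x < u x}
  have hAball : A ⊆ closedBall y ρ := (sep_subset _ _).trans ball_subset_closedBall
  have hballΩ : ball y ρ ⊆ Ω := ball_subset_closedBall.trans hball
  have hopen : IsOpen A := isOpen_setOf_mem_and_lt isOpen_ball (hw.continuousOn.mono hballΩ)
    (hu1.continuousOn.mono hballΩ)
  have hinteg {g : EuclideanSpace ℝ (Fin N) → ℝ} (hg : ContinuousOn g Ω) : IntegrableOn g A :=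
    ((hg.mono hball).integrableOn_compact (isCompact_closedBall y ρ)).mono_set hAball
  have hinteg_u := hinteg (continuousOn_apDensity (zero_lt_one.trans hp).le hF hΩ hu1)
  have hinteg_w := hinteg (continuousOn_apDensity (zero_lt_one.trans hp).le hF hΩ hw)
  have hinteg_f := hinteg hf.continuousOn
  have hinteg_df : IntegrableOn (fun x => fderiv ℝ (fun z => u z - w z) x (x - y)) A :=
    hinteg ((hf.continuousOn_fderiv_of_isOpen hΩ le_rfl).clm_apply (by fun_prop))
  have hfpos : 0 < ∫ x in A, (u x - w x) :=
    setIntegral_pos_of_isOpen hopen hne hinteg_f fun x hx => sub_pos.2 hx.2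
  have hlower : ∫ x in A, (b * fderiv ℝ (fun z => u z - w z) x (x - y) + κ * (u x - w x)) ≤
      ∫ x in A, (apDensity p F u x - apDensity p F w x) :=
    setIntegral_mono_on ((hinteg_df.const_mul b).add (hinteg_f.const_mul κ)) (hinteg_u.sub hinteg_w)
      hopen.measurableSet fun x hx =>
        have hxΩ := hΩ.mem_nhds (hball (hAball hx))
        mul_fderiv_sub_add_le_apDensity_sub hp (hu1.contDiffAt hxΩ |>.differentiableAt one_ne_zero)
          (hw.contDiffAt hxΩ |>.differentiableAt one_ne_zero) (hflux x hx.1) (hFκ x hx.1 hx.2)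
  rw [integral_add (hinteg_df.const_mul b) (hinteg_f.const_mul κ), integral_const_mul,
    integral_const_mul, hparts, integral_sub hinteg_u hinteg_w] at hlower
  have hupper := hu.setIntegral_superlevel_le (zero_lt_one.trans hp).le hF hΩ hρ hball hw hbdry
  refine le_of_mul_le_mul_right ?_ hfpos
  linarith

theorem mul_rpow_le_of_le_on_closedBall {κ M : ℝ} (hu : APLocMin N p F Ω u) (hp : 1 < p)
    (hF : Continuous F) (hFκ : ∀ s t, 0 ≤ s → s < t → t ≤ M → κ * (t - s) ≤ F t - F s)
    (hΩ : IsOpen Ω) (hρ : 0 < ρ) (hball : closedBall y ρ ⊆ Ω) (huy : 0 < u y)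
    (huM : ∀ x ∈ closedBall y ρ, u x ≤ M) :
    κ * ρ ^ p ≤ N * (p / (p - 1) * M) ^ (p - 1) := by
  set q := p / (p - 1)
  have hpq : p.HolderConjugate q := .conjExponent hp
  have hM : 0 < M := huy.trans_le (huM y (mem_closedBall_self hρ.le))
  have hρq : 0 < ρ ^ q := Real.rpow_pos_of_pos hρ q
  have ha : 0 < M / ρ ^ q := div_pos hM hρq
  have hsphere : ∀ x ∈ sphere y ρ, radialBarrier (M / ρ ^ q) q y x = M := fun x hx => by
    rw [radialBarrier, mem_sphere_iff_norm.1 hx, div_mul_cancel₀ _ hρq.ne']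
  have hcenter : radialBarrier (M / ρ ^ q) q y y = 0 := by
    simp [radialBarrier, Real.zero_rpow hpq.symm.ne_zero]
  have hκ : κ ≤ N * (M / ρ ^ q * q) ^ (p - 1) :=
    hu.le_mul_of_flux_eq hp hF hΩ hρ hball (contDiff_radialBarrier hpq.symm.lt _ y).contDiffOn
      (fun x hx => (huM x (sphere_subset_closedBall hx)).trans_eq (hsphere x hx).symm)
      (fun x _ => flux_radialBarrier hpq ha y x)
      (fun x hx hlt => hFκ _ _ (mul_nonneg ha.le (by positivity)) hlt
        (huM x (ball_subset_closedBall hx)))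
      ⟨y, mem_ball_self hρ, hcenter.trans_lt huy⟩
  have hscale : (M / ρ ^ q * q) ^ (p - 1) = (q * M) ^ (p - 1) / ρ ^ p := by
    rw [div_mul_eq_mul_div, mul_comm M, Real.div_rpow (mul_pos hpq.symm.pos hM).le hρq.le,
      ← Real.rpow_mul hρ.le, mul_comm q (p - 1), hpq.sub_one_mul_conj]
  rwa [hscale, ← mul_div_assoc, le_div_iff₀ (Real.rpow_pos_of_pos hρ p)] at hκ

theorem mul_rpow_le_of_Fgam {γ lp lm M : ℝ} (hu : APLocMin N p (Fgam γ lp lm) Ω u) (hp : 1 < p)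
    (hγ0 : 0 < γ) (hγ1 : γ ≤ 1) (hlp : 0 ≤ lp) (hΩ : IsOpen Ω) (hρ : 0 < ρ)
    (hball : closedBall y ρ ⊆ Ω) (huy : 0 < u y) (huM : ∀ x ∈ closedBall y ρ, u x ≤ M) :
    lp * γ * ρ ^ p ≤ N * (p / (p - 1)) ^ (p - 1) * M ^ (p - γ) := by
  have hM : 0 < M := huy.trans_le (huM y (mem_closedBall_self hρ.le))
  have hq : 0 < p / (p - 1) := div_pos (zero_lt_one.trans hp) (sub_pos.2 hp)
  have hκ := hu.mul_rpow_le_of_le_on_closedBall hp (Fgam.continuous hγ0.le)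
    (fun s t hs hst htM => Fgam.mul_sub_le_sub hγ0 hγ1 hlp hs hst htM) hΩ hρ hball huy huM
  have hpow : M ^ (p - 1) = M ^ (p - γ) * M ^ (γ - 1) := by
    rw [← Real.rpow_add hM]
    ring_nf
  rw [Real.mul_rpow hq.le hM.le, hpow] at hκ
  refine le_of_mul_le_mul_right ?_ (Real.rpow_pos_of_pos hM (γ - 1))
  linarith

end APLocMin

section Nondegeneracy

/-- The constant in front of `r^{1+τ}`, obtained from `κ ρ^p ≤ N (p/(p-1))^{p-1} M^{p-γ}` with
`κ = lam γ` and `ρ = r / 2` by solving for `M`. -/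
noncomputable def nondegeneracyConst (N : ℕ) (p γ lam : ℝ) : ℝ :=
  (lam * γ / (N * (p / (p - 1)) ^ (p - 1)) * (1 / 2) ^ p) ^ (1 / (p - γ))

variable {N : ℕ} {p γ : ℝ}

theorem natCast_mul_conjExponent_rpow_pos (hN : 1 ≤ N) (hp : 1 < p) :
    0 < N * (p / (p - 1)) ^ (p - 1) :=
  mul_pos (Nat.cast_pos.2 hN)
    (Real.rpow_pos_of_pos (div_pos (zero_lt_one.trans hp) (sub_pos.2 hp)) _)

theorem nondegeneracyConst_pos {lam : ℝ} (hN : 1 ≤ N) (hp : 1 < p) (hγ0 : 0 < γ) (hlam : 0 < lam) :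
    0 < nondegeneracyConst N p γ lam :=
  Real.rpow_pos_of_pos (mul_pos (div_pos (mul_pos hlam hγ0)
    (natCast_mul_conjExponent_rpow_pos hN hp)) (by positivity)) _

theorem nondegeneracyConst_mul_rpow_le {lam r M : ℝ} (hN : 1 ≤ N) (hp : 1 < p) (hγ0 : 0 < γ)
    (hγp : γ < p) (hlam : 0 ≤ lam) (hr : 0 ≤ r) (hM : 0 ≤ M)
    (hrM : lam * γ * (r / 2) ^ p ≤ N * (p / (p - 1)) ^ (p - 1) * M ^ (p - γ)) :
    nondegeneracyConst N p γ lam * r ^ (1 + γ / (p - γ)) ≤ M := by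
  have hpγ : 0 < p - γ := sub_pos.2 hγp
  have hD := natCast_mul_conjExponent_rpow_pos hN hp
  have hexp : 1 + γ / (p - γ) = p * (1 / (p - γ)) := by
    field_simp
    ring
  have hpow : lam * γ / (N * (p / (p - 1)) ^ (p - 1)) * (1 / 2) ^ p * r ^ p ≤ M ^ (p - γ) := by
    rw [mul_assoc, ← Real.mul_rpow (by norm_num) hr, one_div_mul_eq_div, div_mul_eq_mul_div,
      div_le_iff₀' hD]
    exact hrM
  rw [nondegeneracyConst, hexp, Real.rpow_mul hr, ← Real.mul_rpow (by positivity) (by positivity)]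
  exact (Real.rpow_le_rpow (by positivity) hpow (by positivity)).trans_eq
    (by rw [← Real.rpow_mul hM, mul_one_div_cancel hpγ.ne', Real.rpow_one])

variable {lp lm r : ℝ} {Ω : Set (EuclideanSpace ℝ (Fin N))} {u : EuclideanSpace ℝ (Fin N) → ℝ}
  {x₀ : EuclideanSpace ℝ (Fin N)}

theorem APLocMin.nondegenerate_pos (hu : APLocMin N p (Fgam γ lp lm) Ω u) (hN : 1 ≤ N)
    (hp : 1 < p) (hγ0 : 0 < γ) (hγ1 : γ ≤ 1) (hlp : 0 ≤ lp) (hΩ : IsOpen Ω) (hr : 0 < r)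
    (hball : closedBall x₀ r ⊆ Ω) (hx₀ : x₀ ∈ closure {x ∈ Ω | 0 < u x}) :
    nondegeneracyConst N p γ lp * r ^ (1 + γ / (p - γ)) ≤
      sSup ((fun x => max (u x) 0) '' ball x₀ r) := by
  obtain ⟨y, ⟨-, huy⟩, hy⟩ := mem_closure_iff.1 hx₀ (r / 2) (half_pos hr)
  have hsub : closedBall y (r / 2) ⊆ ball x₀ r :=
    closedBall_subset_ball' (by linarith [dist_comm x₀ y])
  have hbdd : BddAbove ((fun x => max (u x) 0) '' ball x₀ r) :=
    ((isCompact_closedBall x₀ r).bddAbove_image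
      (((hu.contDiffOn hΩ).continuousOn.mono hball).sup continuousOn_const)).mono
      (image_mono ball_subset_closedBall)
  have hle_sup : ∀ x ∈ ball x₀ r, max (u x) 0 ≤ sSup ((fun x => max (u x) 0) '' ball x₀ r) :=
    fun x hx => le_csSup hbdd (mem_image_of_mem _ hx)
  exact nondegeneracyConst_mul_rpow_le hN hp hγ0 (hγ1.trans_lt hp) hlp hr.le
    ((le_max_right _ _).trans (hle_sup x₀ (mem_ball_self hr)))
    (hu.mul_rpow_le_of_Fgam hp hγ0 hγ1 hlp hΩ (half_pos hr)
      (hsub.trans (ball_subset_closedBall.trans hball)) huy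
      fun x hx => (le_max_left _ _).trans (hle_sup x (hsub hx)))

theorem APLocMin.nondegenerate_neg (hu : APLocMin N p (Fgam γ lp lm) Ω u) (hN : 1 ≤ N)
    (hp : 1 < p) (hγ0 : 0 < γ) (hγ1 : γ ≤ 1) (hlm : 0 ≤ lm) (hΩ : IsOpen Ω) (hr : 0 < r)
    (hball : closedBall x₀ r ⊆ Ω) (hx₀ : x₀ ∈ closure {x ∈ Ω | u x < 0}) :
    nondegeneracyConst N p γ lm * r ^ (1 + γ / (p - γ)) ≤
      sSup ((fun x => max (-u x) 0) '' ball x₀ r) := by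
  have hneg : APLocMin N p (Fgam γ lm lp) Ω (fun x => -u x) := by
    simpa only [Fgam.neg] using hu.neg
  exact hneg.nondegenerate_pos hN hp hγ0 hγ1 hlm hΩ hr hball (by simpa only [neg_pos] using hx₀)

end Nondegeneracy

theorem stmt4_general (N : ℕ) (hN : 1 ≤ N) (p γ : ℝ) (hp : 1 < p) (hγ0 : 0 < γ) (hγ1 : γ ≤ 1) :
    (∀ lp : ℝ, 0 < lp → ∃ cp : ℝ, 0 < cp ∧ ∀ (lm : ℝ) (Ω : Set (EuclideanSpace ℝ (Fin N))),
      IsOpen Ω → ∀ u : EuclideanSpace ℝ (Fin N) → ℝ, APLocMin N p (Fgam γ lp lm) Ω u →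
      ∀ x₀ ∈ closure {x ∈ Ω | 0 < u x}, ∀ r : ℝ, 0 < r → closedBall x₀ r ⊆ Ω →
        cp * r ^ (1 + γ / (p - γ)) ≤ sSup ((fun x => max (u x) 0) '' ball x₀ r)) ∧
    (∀ lm : ℝ, 0 < lm → ∃ cm : ℝ, 0 < cm ∧ ∀ (lp : ℝ) (Ω : Set (EuclideanSpace ℝ (Fin N))),
      IsOpen Ω → ∀ u : EuclideanSpace ℝ (Fin N) → ℝ, APLocMin N p (Fgam γ lp lm) Ω u →
      ∀ x₀ ∈ closure {x ∈ Ω | u x < 0}, ∀ r : ℝ, 0 < r → closedBall x₀ r ⊆ Ω →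
        cm * r ^ (1 + γ / (p - γ)) ≤ sSup ((fun x => max (-u x) 0) '' ball x₀ r)) :=
  ⟨fun lp hlp => ⟨nondegeneracyConst N p γ lp, nondegeneracyConst_pos hN hp hγ0 hlp,
      fun _ _ hΩ _ hu _ hx₀ _ hr hball =>
        hu.nondegenerate_pos hN hp hγ0 hγ1 hlp.le hΩ hr hball hx₀⟩,
    fun lm hlm => ⟨nondegeneracyConst N p γ lm, nondegeneracyConst_pos hN hp hγ0 hlm,
      fun _ _ hΩ _ hu _ hx₀ _ hr hball =>
        hu.nondegenerate_neg hN hp hγ0 hγ1 hlm.le hΩ hr hball hx₀⟩⟩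

/-- Nondegeneracy: near points of the closure of a phase, a local minimizer grows at
least like `r^{1+τ}`, `τ = γ/(p-γ)`, with constants depending only on `N, p, γ` and
the corresponding `λ`. -/
theorem stmt4 (N : ℕ) (hN : 1 ≤ N) (p γ : ℝ)
    (hp : 1 < p) (hγ0 : 0 < γ) (hγ1 : γ ≤ 1) (hγp : γ < p) :
    (∀ lp : ℝ, 0 < lp → ∃ cp : ℝ, 0 < cp ∧ ∀ lm : ℝ, 0 < lm →
      ∀ (Ω : Set (EuclideanSpace ℝ (Fin N))), IsOpen Ω → Bornology.IsBounded Ω →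
      ∀ u : EuclideanSpace ℝ (Fin N) → ℝ, APLocMin N p (Fgam γ lp lm) Ω u →
      ∀ x₀ ∈ Ω, x₀ ∈ closure {x ∈ Ω | 0 < u x} →
      ∀ r : ℝ, 0 < r → r < Metric.infDist x₀ (frontier Ω) →
        cp * r ^ (1 + γ / (p - γ)) ≤
          sSup ((fun x => max (u x) 0) '' Metric.ball x₀ r)) ∧
    (∀ lm : ℝ, 0 < lm → ∃ cm : ℝ, 0 < cm ∧ ∀ lp : ℝ, 0 < lp →
      ∀ (Ω : Set (EuclideanSpace ℝ (Fin N))), IsOpen Ω → Bornology.IsBounded Ω →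
      ∀ u : EuclideanSpace ℝ (Fin N) → ℝ, APLocMin N p (Fgam γ lp lm) Ω u →
      ∀ x₀ ∈ Ω, x₀ ∈ closure {x ∈ Ω | u x < 0} →
      ∀ r : ℝ, 0 < r → r < Metric.infDist x₀ (frontier Ω) →
        cm * r ^ (1 + γ / (p - γ)) ≤
          sSup ((fun x => max (-u x) 0) '' Metric.ball x₀ r)) :=
  have hball {Ω : Set (EuclideanSpace ℝ (Fin N))} (hΩ : IsOpen Ω) {x₀} (hx₀ : x₀ ∈ Ω) {r : ℝ}
      (hr : 0 < r) (hrΩ : r < infDist x₀ (frontier Ω)) : closedBall x₀ r ⊆ Ω :=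
    closedBall_subset_of_lt_infDist_frontier hΩ hx₀ hr.le hrΩ
  have ⟨hpos, hneg⟩ := stmt4_general N hN p γ hp hγ0 hγ1
  ⟨fun lp hlp => (hpos lp hlp).imp fun _ ⟨hcp, hbound⟩ =>
      ⟨hcp, fun lm _ Ω hΩ _ u hu x₀ hx₀ hcl r hr hrΩ =>
        hbound lm Ω hΩ u hu x₀ hcl r hr (hball hΩ hx₀ hr hrΩ)⟩,
    fun lm hlm => (hneg lm hlm).imp fun _ ⟨hcm, hbound⟩ =>
      ⟨hcm, fun lp _ Ω hΩ _ u hu x₀ hx₀ hcl r hr hrΩ =>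
        hbound lp Ω hΩ u hu x₀ hcl r hr (hball hΩ hx₀ hr hrΩ)⟩⟩
end

section
/- Let N ≥ 1, 2 ≤ p < ∞, 0 < γ < p, λ₊, λ₋ > 0, δ₀ > 0, M > 0. There exists C > 0, depending only on N, p, γ, λ₊, λ₋, δ₀ and M, with the following property. Let Ω ⊆ ℝ^N be open and bounded, δ ∈ [0, δ₀], and let u be a local minimizer of J_δ on Ω with closure(B_{4R}(x₀)) ⊆ Ω and sup_{B_{4R}(x₀)} |u| ≤ M. Let ū ∈ C¹(B_{2R}(x₀)) ∩ C(closure(B_{2R}(x₀))) satisfy: (i) ∫ |∇ū|^{p−2} ∇ū·∇φ dx = 0 for all φ ∈ C_c^∞(B_{2R}(x₀)); (ii) ū = u on ∂B_{2R}(x₀); (iii) sup_{B_{2R}(x₀)} |ū| ≤ sup_{B_{2R}(x₀)} |u|; (iv) ∫_{B_{2R}(x₀)} |∇ū|^p dx ≤ ∫_{B_{2R}(x₀)} |∇u|^p dx < ∞; (v) ∫_{B_{2R}(x₀)} (|∇u|^p/p + δ F_γ(u)) dx ≤ ∫_{B_{2R}(x₀)} (|∇ū|^p/p + δ F_γ(ū))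 dx. Then ∫_{B_R(x₀)} |∇u − ∇ū|² dx ≤ C R^{N + 2γ/(p−γ)} if 0 < γ ≤ 1, and ∫_{B_R(x₀)} |∇u − ∇ū|² dx ≤ C R^{N + 2/(p−1)} if 1 ≤ γ < p. -/
open MeasureTheory Metric Set
open scoped InnerProductSpace

/-!
Write `v = u - w`. Uniform convexity of `‖·‖^p` for `2 ≤ p` bounds `‖∇u‖^p` below by
`‖∇w‖^p + p ‖∇w‖^(p - 2) ⟪∇w, ∇v⟫ + 2^(1 - p) ‖∇v‖^p`, and the middle term integrates to zero
because `w` is `p`-harmonic and `v` vanishes on the boundary. The energy inequality then bounds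
`∫ ‖∇v‖^p` by the difference of the potential terms, hence by `∫ |v|^a` with `a = min γ 1`, since
the potential is `a`-Hölder on bounded sets. By Jensen and the Poincaré inequality this is at most a
constant times `R^a |B|^(1 - a / p) (∫ ‖∇v‖^p)^(a / p)`, whose last factor is absorbed because
`a < p`. A last use of Jensen lowers the exponent from `p` to `2`.

The class `C¹(U) ∩ C(closure U)` has no trace theory, so a function vanishing on the boundary is
tested through its truncations `φ_ε(v)`, where `φ_ε` is a smooth map vanishing near `0`; these have
compact support in `U` and their gradients converge to `∇v`.
-/

section UniformConvexity

variable {E : Type*} [NormedAddCommGroup E] [InnerProductSpace ℝ E] {p : ℝ}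

lemma norm_rpow_sub_two_smul_self (hp : p ≠ 1) (a : E) :
    ‖‖a‖ ^ (p - 2) • a‖ = ‖a‖ ^ (p - 1) := by
  rcases eq_or_ne a 0 with rfl | ha
  · simp [Real.zero_rpow (sub_ne_zero.2 hp)]
  · rw [norm_smul, Real.norm_of_nonneg (by positivity),
      ← Real.rpow_add_one (norm_pos_iff.2 ha).ne']
    ring_nf

lemma norm_rpow_add_mul_inner_sub_le (hp : 1 ≤ p) (a b : E) :
    ‖a‖ ^ p + p * (‖a‖ ^ (p - 2) * ⟪a, b - a⟫_ℝ) ≤ ‖b‖ ^ p := by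
  rcases eq_or_ne a 0 with rfl | ha
  · simp only [norm_zero, inner_zero_left, mul_zero, add_zero,
      Real.zero_rpow (by linarith : p ≠ 0)]
    positivity
  have ha' : 0 < ‖a‖ := norm_pos_iff.2 ha
  have rpow_eq : ‖a‖ ^ p = ‖a‖ ^ (p - 2) * ‖a‖ ^ 2 := by
    rw [← Real.rpow_natCast, ← Real.rpow_add ha']
    norm_num
  have bernoulli : 1 + p * (‖b‖ / ‖a‖ - 1) ≤ (‖b‖ / ‖a‖) ^ p := by
    have hs : -1 ≤ ‖b‖ / ‖a‖ - 1 := by linarith [div_nonneg (norm_nonneg b) ha'.le]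
    simpa using one_add_mul_self_le_rpow_one_add hs hp
  have cauchy_schwarz : ⟪a, b - a⟫_ℝ ≤ ‖a‖ * ‖b‖ - ‖a‖ ^ 2 := by
    rw [inner_sub_right, real_inner_self_eq_norm_sq]
    linarith [real_inner_le_norm a b]
  calc ‖a‖ ^ p + p * (‖a‖ ^ (p - 2) * ⟪a, b - a⟫_ℝ)
      ≤ ‖a‖ ^ p + p * (‖a‖ ^ (p - 2) * (‖a‖ * ‖b‖ - ‖a‖ ^ 2)) := by gcongr
    _ = (1 + p * (‖b‖ / ‖a‖ - 1)) * ‖a‖ ^ p := by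
        rw [rpow_eq]
        field_simp
    _ ≤ (‖b‖ / ‖a‖) ^ p * ‖a‖ ^ p := by gcongr
    _ = ‖b‖ ^ p := by
        rw [← Real.mul_rpow (by positivity) ha'.le, div_mul_cancel₀ _ ha'.ne']

lemma norm_midpoint_rpow_add_norm_sub_rpow_le (hp : 2 ≤ p) (a b : E) :
    ‖(2 : ℝ)⁻¹ • (a + b)‖ ^ p + 2⁻¹ ^ p * ‖a - b‖ ^ p ≤ 2⁻¹ * (‖a‖ ^ p + ‖b‖ ^ p) := by
  have rpow_eq (x : E) : ‖x‖ ^ p = (‖x‖ ^ 2) ^ (p / 2) := by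
    rw [← Real.rpow_natCast_mul (norm_nonneg x)]
    congr 1
    push_cast
    ring
  have parallelogram : ‖(2 : ℝ)⁻¹ • (a + b)‖ ^ 2 + ‖(2 : ℝ)⁻¹ • (a - b)‖ ^ 2
      = 2⁻¹ * ‖a‖ ^ 2 + 2⁻¹ * ‖b‖ ^ 2 := by
    have := parallelogram_law_with_norm ℝ a b
    rw [norm_smul, norm_smul, Real.norm_of_nonneg (by norm_num)]
    linarith
  calc ‖(2 : ℝ)⁻¹ • (a + b)‖ ^ p + 2⁻¹ ^ p * ‖a - b‖ ^ p
      = (‖(2 : ℝ)⁻¹ • (a + b)‖ ^ 2) ^ (p / 2) + (‖(2 : ℝ)⁻¹ • (a - b)‖ ^ 2) ^ (p / 2) := by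
        rw [← rpow_eq, ← rpow_eq, norm_smul _ (a - b), Real.norm_of_nonneg (by norm_num),
          Real.mul_rpow (by norm_num) (norm_nonneg _)]
    _ ≤ (2⁻¹ * ‖a‖ ^ 2 + 2⁻¹ * ‖b‖ ^ 2) ^ (p / 2) := by
        rw [← parallelogram]
        exact Real.add_rpow_le_rpow_add (by positivity) (by positivity) (by linarith)
    _ ≤ 2⁻¹ * (‖a‖ ^ 2) ^ (p / 2) + 2⁻¹ * (‖b‖ ^ 2) ^ (p / 2) :=
        (convexOn_rpow (by linarith)).2 (sq_nonneg ‖a‖) (sq_nonneg ‖b‖)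
          (by norm_num) (by norm_num) (by norm_num)
    _ = 2⁻¹ * (‖a‖ ^ p + ‖b‖ ^ p) := by rw [← rpow_eq, ← rpow_eq, mul_add]

lemma norm_sub_rpow_le (hp : 2 ≤ p) (a b : E) :
    ‖a - b‖ ^ p ≤ 2 ^ (p - 1) * (‖a‖ ^ p + ‖b‖ ^ p) := by
  have clarkson := norm_midpoint_rpow_add_norm_sub_rpow_le hp a b
  have midpoint_nonneg : 0 ≤ ‖(2 : ℝ)⁻¹ • (a + b)‖ ^ p := by positivity
  have h : (2 : ℝ)⁻¹ ^ p * ‖a - b‖ ^ p ≤ 2⁻¹ * (‖a‖ ^ p + ‖b‖ ^ p) := by linarith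
  rw [Real.inv_rpow (by norm_num), inv_mul_le_iff₀ (by positivity)] at h
  rwa [Real.rpow_sub_one two_ne_zero, div_eq_mul_inv, mul_assoc]

-- Apply the tangent inequality at `a` to the midpoint of `a` and `b`, then Clarkson.
lemma norm_rpow_add_mul_inner_sub_add_norm_sub_rpow_le (hp : 2 ≤ p) (a b : E) :
    ‖a‖ ^ p + p * (‖a‖ ^ (p - 2) * ⟪a, b - a⟫_ℝ) + 2 ^ (1 - p) * ‖b - a‖ ^ p ≤ ‖b‖ ^ p := by
  have tangent := norm_rpow_add_mul_inner_sub_le (by linarith : 1 ≤ p) a ((2 : ℝ)⁻¹ • (b + a))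
  have clarkson := norm_midpoint_rpow_add_norm_sub_rpow_le hp b a
  rw [show (2 : ℝ)⁻¹ • (b + a) - a = (2 : ℝ)⁻¹ • (b - a) by module, inner_smul_right] at tangent
  rw [Real.inv_rpow (by norm_num)] at clarkson
  rw [Real.rpow_sub two_pos, Real.rpow_one, div_eq_mul_inv]
  linarith

end UniformConvexity

section RealPowers

variable {p : ℝ}

lemma mul_rpow_sub_one_le_rpow_add_rpow (hp : 1 ≤ p) {s t : ℝ} (hs : 0 ≤ s) (ht : 0 ≤ t) :
    t * s ^ (p - 1) ≤ t ^ p + s ^ p := by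
  have hmax : 0 ≤ max t s := ht.trans (le_max_left t s)
  calc t * s ^ (p - 1) ≤ max t s * max t s ^ (p - 1) := by
        gcongr
        exacts [le_max_left t s, le_max_right t s]
    _ = max t s ^ p := by
        rw [mul_comm, ← Real.rpow_add_one' hmax (by linarith), sub_add_cancel]
    _ ≤ t ^ p + s ^ p := by
        rcases max_choice t s with h | h <;> rw [h]
        exacts [le_add_of_nonneg_right (by positivity), le_add_of_nonneg_left (by positivity)]

lemma abs_rpow_sub_rpow_le_abs_sub_rpow {α s t : ℝ} (hα : 0 ≤ α) (hα1 : α ≤ 1) (hs : 0 ≤ s)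
    (ht : 0 ≤ t) : |s ^ α - t ^ α| ≤ |s - t| ^ α := by
  wlog hts : t ≤ s generalizing s t
  · rw [abs_sub_comm, abs_sub_comm s]
    exact this ht hs (le_of_not_ge hts)
  have hst : 0 ≤ s - t := sub_nonneg.2 hts
  have hmono : t ^ α ≤ s ^ α := by gcongr
  rw [abs_of_nonneg (sub_nonneg.2 hmono), abs_of_nonneg hst, sub_le_iff_le_add]
  simpa using Real.rpow_add_le_add_rpow hst ht hα hα1

lemma abs_rpow_sub_rpow_le_mul_abs_sub {γ M s t : ℝ} (hγ : 1 ≤ γ) (hs : s ∈ Icc 0 M)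
    (ht : t ∈ Icc 0 M) : |s ^ γ - t ^ γ| ≤ γ * M ^ (γ - 1) * |s - t| := by
  refine Convex.norm_image_sub_le_of_norm_hasDerivWithin_le (f := fun x : ℝ => x ^ γ)
    (fun x _ => (Real.hasDerivAt_rpow_const (Or.inr hγ)).hasDerivWithinAt) (fun x hx => ?_)
    (convex_Icc 0 M) ht hs
  have hx0 : 0 ≤ x := hx.1
  rw [Real.norm_of_nonneg (by positivity)]
  gcongr
  exact hx.2

lemma abs_rpow_sub_rpow_le_mul_abs_sub_rpow_min {γ M s t : ℝ} (hγ : 0 ≤ γ)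
    (hs : s ∈ Icc 0 M) (ht : t ∈ Icc 0 M) :
    |s ^ γ - t ^ γ| ≤ max 1 (γ * M ^ (γ - 1)) * |s - t| ^ min γ 1 := by
  rcases le_total γ 1 with h | h
  · rw [min_eq_left h]
    exact (abs_rpow_sub_rpow_le_abs_sub_rpow hγ h hs.1 ht.1).trans
      (le_mul_of_one_le_left (by positivity) (le_max_left _ _))
  · rw [min_eq_right h, Real.rpow_one]
    exact (abs_rpow_sub_rpow_le_mul_abs_sub h hs ht).trans (by gcongr; exact le_max_right _ _)

lemma le_rpow_inv_of_le_mul_rpow {x b θ : ℝ} (hx : 0 ≤ x) (hb : 0 ≤ b) (hθ : θ < 1)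
    (h : x ≤ b * x ^ θ) : x ≤ b ^ (1 - θ)⁻¹ := by
  rcases hx.eq_or_lt with rfl | hx
  · positivity
  rw [Real.le_rpow_inv_iff_of_pos hx.le hb (sub_pos.2 hθ), Real.rpow_sub hx, Real.rpow_one]
  exact (div_le_iff₀ (by positivity)).2 h

end RealPowers

section Potential

variable {γ lp lm : ℝ}

lemma continuous_Fgam (hγ : 0 ≤ γ) : Continuous (Fgam γ lp lm) := by
  unfold Fgam
  fun_prop (disch := exact fun _ => Or.inr hγ)

lemma abs_Fgam_sub_Fgam_le (hγ : 0 ≤ γ) (hlp : 0 ≤ lp) (hlm : 0 ≤ lm) {M s t : ℝ}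
    (hs : |s| ≤ M) (ht : |t| ≤ M) :
    |Fgam γ lp lm s - Fgam γ lp lm t| ≤
      (lp + lm) * max 1 (γ * M ^ (γ - 1)) * |s - t| ^ min γ 1 := by
  have posPart_mem {x : ℝ} (hx : |x| ≤ M) : max x 0 ∈ Icc 0 M :=
    ⟨le_max_right x 0, max_le ((le_abs_self x).trans hx) ((abs_nonneg x).trans hx)⟩
  have posPart_holder {x y : ℝ} (hx : |x| ≤ M) (hy : |y| ≤ M) : |max x 0 ^ γ - max y 0 ^ γ| ≤
      max 1 (γ * M ^ (γ - 1)) * |x - y| ^ min γ 1 :=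
    (abs_rpow_sub_rpow_le_mul_abs_sub_rpow_min hγ (posPart_mem hx) (posPart_mem hy)).trans
      (by gcongr _ * ?_ ^ _; exact abs_max_sub_max_le_abs x y 0)
  have negPart_holder := posPart_holder (x := -s) (y := -t) (by rwa [abs_neg]) (by rwa [abs_neg])
  rw [neg_sub_neg, abs_sub_comm t s] at negPart_holder
  calc |Fgam γ lp lm s - Fgam γ lp lm t|
      = |lp * (max s 0 ^ γ - max t 0 ^ γ) + lm * (max (-s) 0 ^ γ - max (-t) 0 ^ γ)| := by
        unfold Fgam
        ring_nf
    _ ≤ lp * |max s 0 ^ γ - max t 0 ^ γ| + lm * |max (-s) 0 ^ γ - max (-t) 0 ^ γ| := by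
        refine (abs_add_le _ _).trans_eq ?_
        rw [abs_mul, abs_mul, abs_of_nonneg hlp, abs_of_nonneg hlm]
    _ ≤ lp * (max 1 (γ * M ^ (γ - 1)) * |s - t| ^ min γ 1) +
          lm * (max 1 (γ * M ^ (γ - 1)) * |s - t| ^ min γ 1) := by
        gcongr
        exact posPart_holder hs ht
    _ = (lp + lm) * max 1 (γ * M ^ (γ - 1)) * |s - t| ^ min γ 1 := by ring

end Potential

section Jensen

variable {X : Type*} [MeasurableSpace X] {μ : Measure X} {s : Set X} {g : X → ℝ} {q : ℝ}

lemma integrableOn_rpow_of_le_one (hs : μ s ≠ ⊤) (hg : IntegrableOn g s μ) (hg0 : ∀ x, 0 ≤ g x)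
    (hq : 0 ≤ q) (hq1 : q ≤ 1) : IntegrableOn (fun x => g x ^ q) s μ := by
  have hdom : IntegrableOn (fun x => 1 + g x) s μ := (integrableOn_const hs).add hg
  refine hdom.mono' (hg.aestronglyMeasurable.aemeasurable.pow_const q).aestronglyMeasurable
    (.of_forall fun x => ?_)
  rw [Real.norm_of_nonneg (Real.rpow_nonneg (hg0 x) q)]
  rcases le_total (g x) 1 with h | h
  · linarith [Real.rpow_le_one (hg0 x) h hq, hg0 x]
  · linarith [Real.rpow_le_self_of_one_le h hq1]

lemma setIntegral_rpow_le (hs : μ s ≠ ⊤) (hg : IntegrableOn g s μ) (hg0 : ∀ x, 0 ≤ g x)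
    (hq : 0 ≤ q) (hq1 : q ≤ 1) :
    ∫ x in s, g x ^ q ∂μ ≤ μ.real s ^ (1 - q) * (∫ x in s, g x ∂μ) ^ q := by
  have hinteg : 0 ≤ ∫ x in s, g x ∂μ := integral_nonneg hg0
  rcases eq_or_ne (μ s) 0 with hs0 | hs0
  · rw [setIntegral_measure_zero _ hs0]
    positivity
  have hμ : 0 < μ.real s := ENNReal.toReal_pos hs0 hs
  have jensen := (Real.concaveOn_rpow hq hq1).le_map_set_average
    (Real.continuous_rpow_const hq).continuousOn isClosed_Ici hs0 hs (.of_forall hg0) hg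
    (integrableOn_rpow_of_le_one hs hg hg0 hq hq1)
  rw [setAverage_eq, setAverage_eq, smul_eq_mul, smul_eq_mul, Real.mul_rpow (by positivity) hinteg,
    Real.inv_rpow hμ.le, inv_mul_le_iff₀ hμ] at jensen
  rwa [Real.rpow_sub hμ, Real.rpow_one, div_eq_mul_inv, mul_assoc]

end Jensen

lemma integrableOn_of_continuousOn_closure {X Y : Type*} [MetricSpace X] [ProperSpace X]
    [MeasurableSpace X] [OpensMeasurableSpace X] [NormedAddCommGroup Y] {μ : Measure X}
    [IsFiniteMeasureOnCompacts μ] {f : X → Y} {U : Set X} (hU : Bornology.IsBounded U)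
    (hf : ContinuousOn f (closure U)) : IntegrableOn f U μ :=
  (hf.integrableOn_compact hU.isCompact_closure).mono_set subset_closure

section NullGradient

variable {E : Type*} [NormedAddCommGroup E] [NormedSpace ℝ E] {U : Set E} {v : E → ℝ}

lemma countable_setOf_eq_zero_of_fderiv_apply_ne_zero (hv : ∀ x ∈ U, DifferentiableAt ℝ v x)
    (y e : E) :
    {t : ℝ | y + t • e ∈ U ∧ v (y + t • e) = 0 ∧ fderiv ℝ v (y + t • e) e ≠ 0}.Countable := by
  refine (HereditarilyLindelofSpace.isLindelof _).countable_of_isDiscrete ?_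
  rw [isDiscrete_iff_nhdsNE]
  rintro t ⟨htU, -, ht⟩
  have hline : HasDerivAt (fun t : ℝ => y + t • e) e t := by
    simpa using ((hasDerivAt_id t).smul_const e).const_add y
  have hderiv : HasDerivAt (fun t : ℝ => v (y + t • e)) (fderiv ℝ v (y + t • e) e) t :=
    (hv _ htU).hasFDerivAt.comp_hasDerivAt t hline
  rw [← _root_.disjoint_iff, Filter.disjoint_principal_right]
  filter_upwards [hderiv.eventually_ne (c := 0) ht] with t' hne hmem using hne hmem.2.1

variable [FiniteDimensional ℝ E] [MeasurableSpace E] [BorelSpace E] {μ : Measure E}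
  [μ.IsAddHaarMeasure]

lemma ae_fderiv_apply_eq_zero_of_eq_zero (hU : IsOpen U) (hv : ∀ x ∈ U, DifferentiableAt ℝ v x)
    (e : E) : ∀ᵐ x ∂μ, x ∈ U → v x = 0 → fderiv ℝ v x e = 0 := by
  have hvU : ContinuousOn v U := fun x hx => (hv x hx).continuousAt.continuousWithinAt
  set s : Set E := {x | x ∈ U → v x = 0 → fderiv ℝ v x e = 0} with hs
  have hs_eq : s = Uᶜ ∪ (U ∩ v ⁻¹' {0}ᶜ) ∪ {x | fderiv ℝ v x e = 0} := by
    ext x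
    simp only [hs, mem_ofPred_eq, mem_union, mem_compl_iff, mem_inter_iff, mem_preimage,
      mem_singleton_iff]
    tauto
  have hs_meas : MeasurableSet s := by
    rw [hs_eq]
    exact (hU.measurableSet.compl.union
      (hvU.isOpen_inter_preimage hU isOpen_compl_singleton).measurableSet).union
      (measurable_fderiv_apply_const ℝ v e (measurableSet_singleton 0))
  refine ae_mem_of_ae_add_linearMap_mem (LinearMap.toSpanSingleton ℝ E e) volume μ hs_meas
    fun y => ?_
  filter_upwards [(countable_setOf_eq_zero_of_fderiv_apply_ne_zero hv y e).ae_notMem volume]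
    with t ht htU ht0
  by_contra hne
  exact ht ⟨htU, ht0, hne⟩

lemma ae_fderiv_eq_zero_of_eq_zero (hU : IsOpen U) (hv : ∀ x ∈ U, DifferentiableAt ℝ v x) :
    ∀ᵐ x ∂μ, x ∈ U → v x = 0 → fderiv ℝ v x = 0 := by
  let b := Module.finBasis ℝ E
  have hbasis : ∀ᵐ x ∂μ, ∀ i, x ∈ U → v x = 0 → fderiv ℝ v x (b i) = 0 :=
    ae_all_iff.2 fun i => ae_fderiv_apply_eq_zero_of_eq_zero hU hv (b i)
  filter_upwards [hbasis] with x hx hxU hx0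
  exact ContinuousLinearMap.coe_injective (b.ext fun i => hx i hxU hx0)

end NullGradient

section Truncation

/-- A smooth approximation of the identity on the line which vanishes on `[-1, 1]` and is the
identity where `2 ≤ |t|`. -/
noncomputable def smoothDeadZone (t : ℝ) : ℝ := t * Real.smoothTransition (t ^ 2 - 1)

lemma contDiff_smoothDeadZone {n : ℕ∞} : ContDiff ℝ n smoothDeadZone :=
  contDiff_id.mul (Real.smoothTransition.contDiff.comp ((contDiff_id.pow 2).sub contDiff_const))

lemma smoothDeadZone_of_abs_le_one {t : ℝ} (ht : |t| ≤ 1) : smoothDeadZone t = 0 := by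
  have hsq : t ^ 2 - 1 ≤ 0 := sub_nonpos.2 ((sq_le_one_iff_abs_le_one t).2 ht)
  rw [smoothDeadZone, Real.smoothTransition.zero_of_nonpos hsq, mul_zero]

lemma smoothDeadZone_of_two_le_abs {t : ℝ} (ht : 2 ≤ |t|) : smoothDeadZone t = t := by
  have hsq : 1 ≤ t ^ 2 - 1 := by nlinarith [sq_abs t]
  rw [smoothDeadZone, Real.smoothTransition.one_of_one_le hsq, mul_one]

lemma abs_smoothDeadZone_le (t : ℝ) : |smoothDeadZone t| ≤ |t| := by
  rw [smoothDeadZone, abs_mul, abs_of_nonneg (Real.smoothTransition.nonneg _)]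
  exact mul_le_of_le_one_right (abs_nonneg t) (Real.smoothTransition.le_one _)

lemma deriv_smoothDeadZone_of_two_lt_abs {t : ℝ} (ht : 2 < |t|) : deriv smoothDeadZone t = 1 := by
  have heq : smoothDeadZone =ᶠ[nhds t] id := by
    filter_upwards [(isOpen_lt continuous_const continuous_abs).mem_nhds ht] with s hs
      using smoothDeadZone_of_two_le_abs (le_of_lt hs)
  rw [heq.deriv_eq, deriv_id]

lemma exists_abs_deriv_smoothDeadZone_le : ∃ K : ℝ, ∀ t, |deriv smoothDeadZone t| ≤ K := by
  have hderiv : Continuous (deriv smoothDeadZone) :=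
    (contDiff_smoothDeadZone (n := 1)).continuous_deriv le_rfl
  obtain ⟨K, hK⟩ := (isCompact_Icc (a := -2) (b := 2)).exists_bound_of_continuousOn
    hderiv.continuousOn
  refine ⟨max K 1, fun t => ?_⟩
  rcases le_or_gt |t| 2 with ht | ht
  · exact (hK t (abs_le.1 ht)).trans (le_max_left K 1)
  · simp [deriv_smoothDeadZone_of_two_lt_abs ht]

lemma eventually_two_lt_abs_div {t : ℝ} (ht : t ≠ 0) :
    ∀ᶠ ε in nhdsWithin (0 : ℝ) (Ioi 0), 2 < |t / ε| := by
  have hpos : 0 < |t| / 2 := half_pos (abs_pos.2 ht)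
  filter_upwards [Ioo_mem_nhdsGT hpos] with ε hε
  rw [abs_div, abs_of_pos hε.1, lt_div_iff₀ hε.1]
  linarith [hε.2]

variable {E : Type*} {U : Set E} {v : E → ℝ} {ε : ℝ}

/-- The function `v` on `U`, cut off smoothly where `|v| ≤ ε` and extended by zero. If `v`
vanishes on the boundary of the bounded open set `U`, this is a `C¹` function with compact support
in `U`. -/
noncomputable def truncation (U : Set E) (v : E → ℝ) (ε : ℝ) : E → ℝ :=
  U.indicator fun x => ε * smoothDeadZone (v x / ε)

lemma truncation_eqOn : EqOn (truncation U v ε) (fun x => ε * smoothDeadZone (v x / ε)) U :=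
  fun _ hx => indicator_of_mem hx _

lemma abs_truncation_le (hε : 0 < ε) (x : E) : |truncation U v ε x| ≤ |v x| := by
  by_cases hx : x ∈ U
  · rw [truncation_eqOn hx]
    calc |ε * smoothDeadZone (v x / ε)| ≤ ε * |v x / ε| := by
          rw [abs_mul, abs_of_pos hε]
          exact mul_le_mul_of_nonneg_left (abs_smoothDeadZone_le _) hε.le
      _ = |v x| := by rw [abs_div, abs_of_pos hε, mul_div_cancel₀ _ hε.ne']
  · simp [truncation, hx]

lemma tendsto_truncation {x : E} (hx : x ∈ U) :
    Filter.Tendsto (fun ε => truncation U v ε x) (nhdsWithin 0 (Ioi 0)) (nhds (v x)) := by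
  refine tendsto_const_nhds.congr' ?_
  rcases eq_or_ne (v x) 0 with hv | hv
  · exact .of_forall fun ε => by simp [truncation_eqOn hx, hv, smoothDeadZone]
  · filter_upwards [eventually_two_lt_abs_div hv, self_mem_nhdsWithin] with ε hε hε0
    rw [truncation_eqOn hx]
    dsimp only
    rw [smoothDeadZone_of_two_le_abs hε.le, mul_div_cancel₀ _ (ne_of_gt hε0)]

lemma truncation_eventuallyEq_zero [TopologicalSpace E] (hU : IsOpen U)
    (hv : ContinuousOn v (closure U)) (hv0 : ∀ x ∈ frontier U, v x = 0) (hε : 0 < ε) {x : E}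
    (hx : x ∉ U) :
    truncation U v ε =ᶠ[nhds x] 0 := by
  by_cases hxU : x ∈ closure U
  · have hvx : v x = 0 := hv0 x ⟨hxU, by rwa [hU.interior_eq]⟩
    have hsmall : ∀ᶠ y in nhdsWithin x (closure U), |v y| < ε :=
      (hv x hxU).abs.eventually (gt_mem_nhds (by simpa [hvx] using hε))
    rw [eventually_nhdsWithin_iff] at hsmall
    filter_upwards [hsmall] with y hy
    refine indicator_apply_eq_zero.2 fun hyU => ?_
    rw [smoothDeadZone_of_abs_le_one, mul_zero]
    rw [abs_div, abs_of_pos hε, div_le_one hε]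
    exact (hy (subset_closure hyU)).le
  · filter_upwards [isClosed_closure.isOpen_compl.mem_nhds hxU] with y hy
    exact indicator_of_notMem (fun hyU => hy (subset_closure hyU)) _

lemma tsupport_truncation_subset [TopologicalSpace E] (hU : IsOpen U)
    (hv : ContinuousOn v (closure U)) (hv0 : ∀ x ∈ frontier U, v x = 0) (hε : 0 < ε) :
    tsupport (truncation U v ε) ⊆ U := by
  intro x hx
  by_contra hxU
  exact notMem_tsupport_iff_eventuallyEq.2 (truncation_eventuallyEq_zero hU hv hv0 hε hxU) hx

variable [NormedAddCommGroup E] [NormedSpace ℝ E]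

lemma contDiff_truncation (hU : IsOpen U) (hvU : ContDiffOn ℝ 1 v U)
    (hv : ContinuousOn v (closure U)) (hv0 : ∀ x ∈ frontier U, v x = 0) (hε : 0 < ε) :
    ContDiff ℝ 1 (truncation U v ε) := by
  refine contDiff_iff_contDiffAt.2 fun x => ?_
  by_cases hx : x ∈ U
  · have hvx : ContDiffAt ℝ 1 v x := hvU.contDiffAt (hU.mem_nhds hx)
    refine ContDiffAt.congr_of_eventuallyEq ?_
      (truncation_eqOn.eventuallyEq_of_mem (hU.mem_nhds hx))
    exact contDiffAt_const.mul
      ((contDiff_smoothDeadZone (n := 1)).contDiffAt.comp x (hvx.div_const ε))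
  · exact contDiffAt_const.congr_of_eventuallyEq
      (truncation_eventuallyEq_zero hU hv hv0 hε hx)

lemma fderiv_truncation (hU : IsOpen U) (hε : 0 < ε) {x : E} (hx : x ∈ U)
    (hvx : DifferentiableAt ℝ v x) :
    fderiv ℝ (truncation U v ε) x = deriv smoothDeadZone (v x / ε) • fderiv ℝ v x := by
  have hdiv : HasFDerivAt (fun x => v x / ε) (ε⁻¹ • fderiv ℝ v x) x := by
    simpa only [div_eq_mul_inv] using hvx.hasFDerivAt.mul_const ε⁻¹
  have hdeadZone : HasDerivAt smoothDeadZone (deriv smoothDeadZone (v x / ε)) (v x / ε) :=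
    ((contDiff_smoothDeadZone (n := 1)).differentiable one_ne_zero _).hasDerivAt
  have hcomp := (hdeadZone.comp_hasFDerivAt x hdiv).const_mul ε
  rw [smul_smul, smul_smul, mul_right_comm, mul_inv_cancel₀ hε.ne', one_mul] at hcomp
  exact (hcomp.congr_of_eventuallyEq
    (truncation_eqOn.eventuallyEq_of_mem (hU.mem_nhds hx))).fderiv

lemma norm_fderiv_truncation_le {K : ℝ} (hK : ∀ t, |deriv smoothDeadZone t| ≤ K)
    (hU : IsOpen U) (hε : 0 < ε) {x : E} (hx : x ∈ U) (hvx : DifferentiableAt ℝ v x) :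
    ‖fderiv ℝ (truncation U v ε) x‖ ≤ K * ‖fderiv ℝ v x‖ := by
  rw [fderiv_truncation hU hε hx hvx, norm_smul]
  exact mul_le_mul_of_nonneg_right (hK _) (norm_nonneg _)

lemma tendsto_fderiv_truncation (hU : IsOpen U) {x : E} (hx : x ∈ U)
    (hvx : DifferentiableAt ℝ v x) (hcrit : v x = 0 → fderiv ℝ v x = 0) :
    Filter.Tendsto (fun ε => fderiv ℝ (truncation U v ε) x) (nhdsWithin 0 (Ioi 0))
      (nhds (fderiv ℝ v x)) := by
  refine tendsto_const_nhds.congr' ?_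
  rcases eq_or_ne (v x) 0 with hv | hv
  · filter_upwards [self_mem_nhdsWithin] with ε hε
    rw [fderiv_truncation hU hε hx hvx, hcrit hv, smul_zero]
  · filter_upwards [eventually_two_lt_abs_div hv, self_mem_nhdsWithin] with ε hε hε0
    rw [fderiv_truncation hU hε0 hx hvx, deriv_smoothDeadZone_of_two_lt_abs hε, one_smul]

variable [FiniteDimensional ℝ E]

lemma hasCompactSupport_truncation (hU : IsOpen U) (hUb : Bornology.IsBounded U)
    (hv : ContinuousOn v (closure U)) (hv0 : ∀ x ∈ frontier U, v x = 0) (hε : 0 < ε) :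
    HasCompactSupport (truncation U v ε) :=
  hUb.isCompact_closure.of_isClosed_subset (isClosed_tsupport _)
    ((tsupport_truncation_subset hU hv hv0 hε).trans subset_closure)

variable [MeasurableSpace E] [BorelSpace E] {μ : Measure E}

lemma tendsto_setIntegral_abs_truncation [IsFiniteMeasureOnCompacts μ] (hU : IsOpen U)
    (hUb : Bornology.IsBounded U) (hvU : ContDiffOn ℝ 1 v U) (hv : ContinuousOn v (closure U))
    (hv0 : ∀ x ∈ frontier U, v x = 0) :
    Filter.Tendsto (fun ε => ∫ x in U, |truncation U v ε x| ∂μ) (nhdsWithin 0 (Ioi 0))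
      (nhds (∫ x in U, |v x| ∂μ)) := by
  refine tendsto_integral_filter_of_dominated_convergence (fun x => |v x|) ?_ ?_
    (integrableOn_of_continuousOn_closure hUb hv.abs) ?_
  · filter_upwards [self_mem_nhdsWithin] with ε hε
    exact (contDiff_truncation hU hvU hv hv0 hε).continuous.abs.aestronglyMeasurable
  · filter_upwards [self_mem_nhdsWithin] with ε hε
    exact .of_forall fun x => by simpa using abs_truncation_le hε x
  · filter_upwards [ae_restrict_mem hU.measurableSet] with x hx using (tendsto_truncation hx).abs

variable [μ.IsAddHaarMeasure]

lemma ae_tendsto_fderiv_truncation (hU : IsOpen U) (hv : ∀ x ∈ U, DifferentiableAt ℝ v x) :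
    ∀ᵐ x ∂μ.restrict U, Filter.Tendsto (fun ε => fderiv ℝ (truncation U v ε) x)
      (nhdsWithin 0 (Ioi 0)) (nhds (fderiv ℝ v x)) := by
  filter_upwards [ae_restrict_mem hU.measurableSet,
    ae_restrict_of_ae (ae_fderiv_eq_zero_of_eq_zero hU hv)] with x hx hcrit
  exact tendsto_fderiv_truncation hU hx (hv x hx) (hcrit hx)

lemma tendsto_setIntegral_norm_fderiv_truncation (hU : IsOpen U) (hvU : ContDiffOn ℝ 1 v U)
    (hv : ContinuousOn v (closure U)) (hv0 : ∀ x ∈ frontier U, v x = 0)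
    (hinteg : IntegrableOn (fderiv ℝ v) U μ) :
    Filter.Tendsto (fun ε => ∫ x in U, ‖fderiv ℝ (truncation U v ε) x‖ ∂μ) (nhdsWithin 0 (Ioi 0))
      (nhds (∫ x in U, ‖fderiv ℝ v x‖ ∂μ)) := by
  have hvd (x : E) (hx : x ∈ U) : DifferentiableAt ℝ v x :=
    (hvU.differentiableOn one_ne_zero).differentiableAt (hU.mem_nhds hx)
  obtain ⟨K, hK⟩ := exists_abs_deriv_smoothDeadZone_le
  refine tendsto_integral_filter_of_dominated_convergence (fun x => K * ‖fderiv ℝ v x‖) ?_ ?_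
    (hinteg.norm.const_mul K) ?_
  · filter_upwards [self_mem_nhdsWithin] with ε hε
    exact ((contDiff_truncation hU hvU hv hv0 hε).continuous_fderiv
      one_ne_zero).norm.aestronglyMeasurable
  · filter_upwards [self_mem_nhdsWithin] with ε hε
    filter_upwards [ae_restrict_mem hU.measurableSet] with x hx
    simpa using norm_fderiv_truncation_le hK hU hε hx (hvd x hx)
  · filter_upwards [ae_tendsto_fderiv_truncation hU hvd] with x hx using hx.norm

lemma tendsto_setIntegral_fderiv_truncation_apply {G : E → E} (hU : IsOpen U)
    (hvU : ContDiffOn ℝ 1 v U) (hv : ContinuousOn v (closure U)) (hv0 : ∀ x ∈ frontier U, v x = 0)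
    (hG : ContinuousOn G U) (hinteg : IntegrableOn (fun x => ‖fderiv ℝ v x‖ * ‖G x‖) U μ) :
    Filter.Tendsto (fun ε => ∫ x in U, fderiv ℝ (truncation U v ε) x (G x) ∂μ)
      (nhdsWithin 0 (Ioi 0)) (nhds (∫ x in U, fderiv ℝ v x (G x) ∂μ)) := by
  have hvd (x : E) (hx : x ∈ U) : DifferentiableAt ℝ v x :=
    (hvU.differentiableOn one_ne_zero).differentiableAt (hU.mem_nhds hx)
  obtain ⟨K, hK⟩ := exists_abs_deriv_smoothDeadZone_le
  refine tendsto_integral_filter_of_dominated_convergence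
    (fun x => K * (‖fderiv ℝ v x‖ * ‖G x‖)) ?_ ?_ (hinteg.const_mul K) ?_
  · filter_upwards [self_mem_nhdsWithin] with ε hε
    exact (((contDiff_truncation hU hvU hv hv0 hε).continuous_fderiv
      one_ne_zero).continuousOn.clm_apply hG).aestronglyMeasurable hU.measurableSet
  · filter_upwards [self_mem_nhdsWithin] with ε hε
    filter_upwards [ae_restrict_mem hU.measurableSet] with x hx
    rw [← mul_assoc]
    exact ContinuousLinearMap.le_of_opNorm_le _
      (norm_fderiv_truncation_le hK hU hε hx (hvd x hx)) _
  · filter_upwards [ae_tendsto_fderiv_truncation hU hvd] with x hx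
    exact ((ContinuousLinearMap.apply ℝ ℝ (G x)).continuous.tendsto _).comp hx

end Truncation

section Mollification

variable {E : Type*} [NormedAddCommGroup E] [NormedSpace ℝ E] [FiniteDimensional ℝ E]
  [MeasurableSpace E] [BorelSpace E] (μ : Measure E) [μ.IsAddHaarMeasure] {φ : E → ℝ}

/-- The mollification of `φ` by the normalized bump function `b`. -/
noncomputable def mollification (b : ContDiffBump (0 : E)) (φ : E → ℝ) : E → ℝ :=
  MeasureTheory.convolution (b.normed μ) φ (ContinuousLinearMap.lsmul ℝ ℝ) μ

lemma contDiff_mollification (b : ContDiffBump (0 : E)) (hφ : Continuous φ) {n : ℕ∞} :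
    ContDiff ℝ n (mollification μ b φ) :=
  b.hasCompactSupport_normed.contDiff_convolution_left _ b.contDiff_normed
    hφ.locallyIntegrable

lemma tsupport_mollification_subset (b : ContDiffBump (0 : E)) :
    tsupport (mollification μ b φ) ⊆ cthickening b.rOut (tsupport φ) := by
  refine closure_minimal ((support_convolution_subset _).trans ?_) isClosed_cthickening
  rintro _ ⟨y, hy, z, hz, rfl⟩
  rw [b.support_normed_eq, mem_ball_zero_iff] at hy
  refine mem_cthickening_of_dist_le (y + z) z _ _ (subset_closure hz) ?_
  simpa [dist_eq_norm] using hy.le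

lemma norm_fderiv_mollification_sub_le (b : ContDiffBump (0 : E)) (hφ : ContDiff ℝ 1 φ)
    (hφc : HasCompactSupport φ) {ε : ℝ} {x : E}
    (hosc : ∀ y ∈ ball x b.rOut, dist (fderiv ℝ φ y) (fderiv ℝ φ x) ≤ ε) :
    ‖fderiv ℝ (mollification μ b φ) x - fderiv ℝ φ x‖ ≤ ε := by
  have hfderiv : fderiv ℝ (mollification μ b φ) x =
      MeasureTheory.convolution (b.normed μ) (fderiv ℝ φ) (ContinuousLinearMap.lsmul ℝ ℝ) μ x :=
    (hφc.hasFDerivAt_convolution_right (ContinuousLinearMap.lsmul ℝ ℝ)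
      b.continuous_normed.locallyIntegrable hφ x).fderiv
  rw [hfderiv, ← dist_eq_norm]
  exact b.dist_normed_convolution_le
    (hφ.continuous_fderiv one_ne_zero).aestronglyMeasurable hosc

end Mollification

lemma exists_contDiff_norm_fderiv_sub_le {E : Type*} [NormedAddCommGroup E] [NormedSpace ℝ E]
    [FiniteDimensional ℝ E] {φ : E → ℝ} (hφ : ContDiff ℝ 1 φ) (hφc : HasCompactSupport φ)
    {d ε : ℝ} (hd : 0 < d) (hε : 0 < ε) :
    ∃ ψ : E → ℝ, ContDiff ℝ (⊤ : ℕ∞) ψ ∧ tsupport ψ ⊆ cthickening d (tsupport φ) ∧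
      ∀ x, ‖fderiv ℝ ψ x - fderiv ℝ φ x‖ ≤ ε := by
  borelize E
  let μ : Measure E := Measure.addHaar
  obtain ⟨η, hη, hosc⟩ := Metric.uniformContinuous_iff.1
    ((hφc.fderiv ℝ).uniformContinuous_of_continuous (hφ.continuous_fderiv one_ne_zero)) ε hε
  have hr : 0 < min d η := lt_min hd hη
  let b : ContDiffBump (0 : E) := ⟨min d η / 2, min d η, half_pos hr, half_lt_self hr⟩
  refine ⟨mollification μ b φ, contDiff_mollification μ b hφ.continuous,
    (tsupport_mollification_subset μ b).trans (cthickening_mono (min_le_left d η) _),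
    fun x => norm_fderiv_mollification_sub_le μ b hφ hφc fun y hy => ?_⟩
  exact (hosc ((mem_ball.1 hy).trans_le (min_le_right d η))).le

section WeaklyDivergenceFree

variable {E : Type*} [NormedAddCommGroup E] [NormedSpace ℝ E]
  [MeasurableSpace E] {μ : Measure E} {U K : Set E} {G : E → E} {φ ψ : E → ℝ}

/-- The vector field `G` has vanishing distributional divergence on `U`. The pairing with a test
function is written as `fderiv ℝ φ x (G x)`, which makes sense without an inner product. -/
def WeaklyDivergenceFreeOn (G : E → E) (U : Set E) (μ : Measure E) : Prop :=
  ∀ φ : E → ℝ, ContDiff ℝ (⊤ : ℕ∞) φ → HasCompactSupport φ → tsupport φ ⊆ U →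
    ∫ x in U, fderiv ℝ φ x (G x) ∂μ = 0

lemma setIntegral_fderiv_apply_eq_of_tsupport_subset (hU : MeasurableSet U) (hKU : K ⊆ U)
    (hφK : tsupport φ ⊆ K) :
    ∫ x in U, fderiv ℝ φ x (G x) ∂μ = ∫ x in K, fderiv ℝ φ x (G x) ∂μ := by
  refine setIntegral_eq_of_subset_of_forall_sdiff_eq_zero hU hKU fun x hx => ?_
  rw [fderiv_of_notMem_tsupport ℝ fun h => hx.2 (hφK h), _root_.zero_apply]

lemma abs_setIntegral_fderiv_apply_sub_le [OpensMeasurableSpace E] [IsFiniteMeasureOnCompacts μ]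
    (hK : IsCompact K) (hG : ContinuousOn G K) (hφ : ContDiff ℝ 1 φ) (hψ : ContDiff ℝ 1 ψ) {ε : ℝ}
    (hε : ∀ x, ‖fderiv ℝ ψ x - fderiv ℝ φ x‖ ≤ ε) :
    |∫ x in K, fderiv ℝ ψ x (G x) ∂μ - ∫ x in K, fderiv ℝ φ x (G x) ∂μ| ≤
      ε * ∫ x in K, ‖G x‖ ∂μ := by
  have integrable {χ : E → ℝ} (hχ : ContDiff ℝ 1 χ) :
      IntegrableOn (fun x => fderiv ℝ χ x (G x)) K μ :=
    ((hχ.continuous_fderiv one_ne_zero).continuousOn.clm_apply hG).integrableOn_compact hK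
  rw [← integral_sub (integrable hψ) (integrable hφ), ← integral_const_mul, ← Real.norm_eq_abs]
  refine norm_integral_le_of_norm_le ((hG.norm.integrableOn_compact hK).const_mul ε)
    (.of_forall fun x => ?_)
  rw [← _root_.sub_apply]
  exact ContinuousLinearMap.le_of_opNorm_le _ (hε x) _

variable [FiniteDimensional ℝ E] [BorelSpace E]

lemma WeaklyDivergenceFreeOn.setIntegral_eq_zero_of_contDiff [IsFiniteMeasureOnCompacts μ]
    (hdiv : WeaklyDivergenceFreeOn G U μ) (hU : IsOpen U) (hG : ContinuousOn G U)
    (hφ : ContDiff ℝ 1 φ) (hφc : HasCompactSupport φ) (hφU : tsupport φ ⊆ U) :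
    ∫ x in U, fderiv ℝ φ x (G x) ∂μ = 0 := by
  obtain ⟨d, hd, hdU⟩ := hφc.isCompact.exists_cthickening_subset_open hU hφU
  set K := cthickening d (tsupport φ)
  have hK : IsCompact K := hφc.isCompact.cthickening
  have hbound (ε : ℝ) (hε : 0 < ε) :
      |∫ x in U, fderiv ℝ φ x (G x) ∂μ| ≤ ε * ∫ x in K, ‖G x‖ ∂μ := by
    obtain ⟨ψ, hψ, hψK, hψφ⟩ := exists_contDiff_norm_fderiv_sub_le hφ hφc hd hε
    have hψc : HasCompactSupport ψ := hK.of_isClosed_subset (isClosed_tsupport ψ) hψK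
    have hsub := abs_setIntegral_fderiv_apply_sub_le (μ := μ) hK (hG.mono hdU) hφ
      (hψ.of_le (by norm_num)) hψφ
    rwa [← setIntegral_fderiv_apply_eq_of_tsupport_subset hU.measurableSet hdU hψK,
      ← setIntegral_fderiv_apply_eq_of_tsupport_subset hU.measurableSet hdU
        (self_subset_cthickening _), hdiv ψ hψ hψc (hψK.trans hdU), zero_sub, abs_neg] at hsub
  have hlim : Filter.Tendsto (fun ε : ℝ => ε * ∫ x in K, ‖G x‖ ∂μ) (nhdsWithin 0 (Ioi 0))
      (nhds 0) := by
    refine tendsto_nhdsWithin_of_tendsto_nhds ?_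
    simpa using (continuous_mul_const (∫ x in K, ‖G x‖ ∂μ)).tendsto 0
  exact abs_nonpos_iff.1 (ge_of_tendsto hlim (eventually_mem_nhdsWithin.mono hbound))

lemma WeaklyDivergenceFreeOn.setIntegral_eq_zero_of_frontier [μ.IsAddHaarMeasure]
    (hdiv : WeaklyDivergenceFreeOn G U μ) (hU : IsOpen U) (hUb : Bornology.IsBounded U)
    (hG : ContinuousOn G U) {v : E → ℝ} (hvU : ContDiffOn ℝ 1 v U)
    (hv : ContinuousOn v (closure U)) (hv0 : ∀ x ∈ frontier U, v x = 0)
    (hinteg : IntegrableOn (fun x => ‖fderiv ℝ v x‖ * ‖G x‖) U μ) :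
    ∫ x in U, fderiv ℝ v x (G x) ∂μ = 0 := by
  have hzero : ∀ᶠ ε in nhdsWithin (0 : ℝ) (Ioi 0),
      ∫ x in U, fderiv ℝ (truncation U v ε) x (G x) ∂μ = 0 := by
    filter_upwards [self_mem_nhdsWithin] with ε hε
    exact hdiv.setIntegral_eq_zero_of_contDiff hU hG (contDiff_truncation hU hvU hv hv0 hε)
      (hasCompactSupport_truncation hU hUb hv hv0 hε) (tsupport_truncation_subset hU hv hv0 hε)
  exact tendsto_nhds_unique
    ((tendsto_setIntegral_fderiv_truncation_apply hU hvU hv hv0 hG hinteg).congr' hzero)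
    tendsto_const_nhds

end WeaklyDivergenceFree

section Poincare

variable {E : Type*} [NormedAddCommGroup E] [NormedSpace ℝ E] {φ : E → ℝ} {x₀ e : E} {r : ℝ}

lemma add_two_mul_smul_notMem_ball (he : ‖e‖ = 1) {x : E} (hx : x ∈ ball x₀ r) :
    x + (2 * r) • e ∉ ball x₀ r := by
  intro hmem
  have hr : 0 < r := pos_of_mem_ball hx
  have hdist : dist (x + (2 * r) • e) x = 2 * r := by
    rw [dist_eq_norm, add_sub_cancel_left, norm_smul, he, mul_one,
      Real.norm_of_nonneg (by positivity)]
  linarith [dist_triangle_right (x + (2 * r) • e) x x₀, mem_ball.1 hx, mem_ball.1 hmem]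

lemma enorm_le_lintegral_enorm_fderiv_of_eq_zero (hφ : ContDiff ℝ 1 φ) (he : ‖e‖ = 1) {T : ℝ}
    (hT : 0 ≤ T) {x : E} (hx : φ (x + T • e) = 0) :
    ‖φ x‖ₑ ≤ ∫⁻ t in Ioc 0 T, ‖fderiv ℝ φ (x + t • e)‖ₑ := by
  have hline (t : ℝ) : HasDerivAt (fun t : ℝ => x + t • e) e t := by
    simpa using ((hasDerivAt_id t).smul_const e).const_add x
  have hderiv (t : ℝ) : HasDerivAt (fun t : ℝ => φ (x + t • e)) (fderiv ℝ φ (x + t • e) e) t :=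
    (hφ.differentiable one_ne_zero _).hasFDerivAt.comp_hasDerivAt t (hline t)
  have hcont : Continuous fun t : ℝ => fderiv ℝ φ (x + t • e) e := by
    have := hφ.continuous_fderiv one_ne_zero
    fun_prop
  have ftc := intervalIntegral.integral_eq_sub_of_hasDerivAt (fun t _ => hderiv t)
    (hcont.intervalIntegrable 0 T)
  rw [intervalIntegral.integral_of_le hT, hx, zero_smul, add_zero, zero_sub] at ftc
  calc ‖φ x‖ₑ = ‖∫ t in Ioc 0 T, fderiv ℝ φ (x + t • e) e‖ₑ := by rw [ftc, enorm_neg]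
    _ ≤ ∫⁻ t in Ioc 0 T, ‖fderiv ℝ φ (x + t • e) e‖ₑ := enorm_integral_le_lintegral_enorm _
    _ ≤ ∫⁻ t in Ioc 0 T, ‖fderiv ℝ φ (x + t • e)‖ₑ := by
        refine lintegral_mono fun t => enorm_le_iff_norm_le.2 ?_
        simpa [he] using (fderiv ℝ φ (x + t • e)).le_opNorm e

variable [Nontrivial E] [FiniteDimensional ℝ E] [MeasurableSpace E] [BorelSpace E]
  {μ : Measure E} [μ.IsAddHaarMeasure]

lemma lintegral_enorm_le_mul_lintegral_enorm_fderiv (hφ : ContDiff ℝ 1 φ)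
    (hφ0 : ∀ x ∉ ball x₀ r, φ x = 0) :
    ∫⁻ x, ‖φ x‖ₑ ∂μ ≤ ENNReal.ofReal (2 * r) * ∫⁻ x, ‖fderiv ℝ φ x‖ₑ ∂μ := by
  obtain ⟨e, he⟩ := exists_norm_eq E zero_le_one
  have hcont : Continuous fun z : E × ℝ => ‖fderiv ℝ φ (z.1 + z.2 • e)‖ₑ :=
    continuous_enorm.comp ((hφ.continuous_fderiv one_ne_zero).comp (by fun_prop))
  have pointwise (x : E) : ‖φ x‖ₑ ≤ ∫⁻ t in Ioc 0 (2 * r), ‖fderiv ℝ φ (x + t • e)‖ₑ := by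
    by_cases hx : x ∈ ball x₀ r
    · have hr : 0 < r := pos_of_mem_ball hx
      exact enorm_le_lintegral_enorm_fderiv_of_eq_zero hφ he (by positivity)
        (hφ0 _ (add_two_mul_smul_notMem_ball he hx))
    · simp [hφ0 x hx]
  calc ∫⁻ x, ‖φ x‖ₑ ∂μ
      ≤ ∫⁻ x, (∫⁻ t in Ioc 0 (2 * r), ‖fderiv ℝ φ (x + t • e)‖ₑ) ∂μ := lintegral_mono pointwise
    _ = ∫⁻ t in Ioc 0 (2 * r), ∫⁻ x, ‖fderiv ℝ φ (x + t • e)‖ₑ ∂μ :=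
        lintegral_lintegral_swap hcont.measurable.aemeasurable
    _ = ∫⁻ _ in Ioc 0 (2 * r), ∫⁻ x, ‖fderiv ℝ φ x‖ₑ ∂μ := by
        congr with t
        exact lintegral_add_right_eq_self (fun x => ‖fderiv ℝ φ x‖ₑ) (t • e)
    _ = ENNReal.ofReal (2 * r) * ∫⁻ x, ‖fderiv ℝ φ x‖ₑ ∂μ := by simp [mul_comm]

lemma integral_abs_le_mul_integral_norm_fderiv (hr : 0 ≤ r) (hφ : ContDiff ℝ 1 φ)
    (hφ0 : ∀ x ∉ ball x₀ r, φ x = 0) :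
    ∫ x, |φ x| ∂μ ≤ 2 * r * ∫ x, ‖fderiv ℝ φ x‖ ∂μ := by
  have hφc : HasCompactSupport φ := HasCompactSupport.intro (isCompact_closedBall x₀ r)
    fun x hx => hφ0 x fun h => hx (ball_subset_closedBall h)
  have hinteg : Integrable (fderiv ℝ φ) μ :=
    (hφ.continuous_fderiv one_ne_zero).integrable_of_hasCompactSupport (hφc.fderiv ℝ)
  have hlint := lintegral_enorm_le_mul_lintegral_enorm_fderiv (μ := μ) hφ hφ0
  have htoReal := ENNReal.toReal_mono
    (ENNReal.mul_ne_top ENNReal.ofReal_ne_top hinteg.hasFiniteIntegral.ne) hlint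
  rw [ENNReal.toReal_mul, ENNReal.toReal_ofReal (by positivity)] at htoReal
  rw [integral_norm_eq_lintegral_enorm hinteg.aestronglyMeasurable]
  simp_rw [← Real.norm_eq_abs]
  rwa [integral_norm_eq_lintegral_enorm hφ.continuous.aestronglyMeasurable]

lemma setIntegral_abs_le_mul_setIntegral_norm_fderiv {U : Set E} {v : E → ℝ} (hU : IsOpen U)
    (hUr : U ⊆ ball x₀ r) (hr : 0 ≤ r) (hvU : ContDiffOn ℝ 1 v U) (hv : ContinuousOn v (closure U))
    (hv0 : ∀ x ∈ frontier U, v x = 0) (hinteg : IntegrableOn (fderiv ℝ v) U μ) :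
    ∫ x in U, |v x| ∂μ ≤ 2 * r * ∫ x in U, ‖fderiv ℝ v x‖ ∂μ := by
  have htrunc : ∀ᶠ ε in nhdsWithin (0 : ℝ) (Ioi 0), ∫ x in U, |truncation U v ε x| ∂μ ≤
      2 * r * ∫ x in U, ‖fderiv ℝ (truncation U v ε) x‖ ∂μ := by
    filter_upwards [self_mem_nhdsWithin] with ε hε
    have hnotMem {x : E} (hx : x ∉ U) : x ∉ tsupport (truncation U v ε) :=
      fun h => hx (tsupport_truncation_subset hU hv hv0 hε h)
    have hpoincare := integral_abs_le_mul_integral_norm_fderiv (μ := μ) hr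
      (contDiff_truncation hU hvU hv hv0 hε)
      fun x hx => image_eq_zero_of_notMem_tsupport (hnotMem fun h => hx (hUr h))
    rwa [setIntegral_eq_integral_of_forall_compl_eq_zero fun x hx => by
        rw [image_eq_zero_of_notMem_tsupport (hnotMem hx), abs_zero],
      setIntegral_eq_integral_of_forall_compl_eq_zero fun x hx => by
        rw [fderiv_of_notMem_tsupport ℝ (hnotMem hx), norm_zero]]
  exact le_of_tendsto_of_tendsto
    (tendsto_setIntegral_abs_truncation hU (isBounded_ball.subset hUr) hvU hv hv0)
    ((tendsto_setIntegral_norm_fderiv_truncation hU hvU hv hv0 hinteg).const_mul _) htrunc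

end Poincare

section Gradient

variable {E : Type*} [NormedAddCommGroup E] [InnerProductSpace ℝ E] [CompleteSpace E]
  {u w : E → ℝ} {U : Set E} {x : E}

lemma norm_fderiv_eq_norm_gradient (u : E → ℝ) (x : E) : ‖fderiv ℝ u x‖ = ‖gradient u x‖ := by
  rw [← toDual_gradient, LinearIsometryEquiv.norm_map]

lemma gradient_sub_eq (hu : DifferentiableAt ℝ u x) (hw : DifferentiableAt ℝ w x) :
    gradient (u - w) x = gradient u x - gradient w x := by
  rw [gradient, fderiv_sub hu hw, map_sub, gradient, gradient]

lemma contDiffOn_one_of_continuousOn_gradient (hU : IsOpen U)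
    (hu : ∀ x ∈ U, DifferentiableAt ℝ u x) (hgrad : ContinuousOn (fun x => gradient u x) U) :
    ContDiffOn ℝ 1 u U := by
  rw [← zero_add 1, contDiffOn_succ_iff_fderiv_of_isOpen hU, contDiffOn_zero]
  refine ⟨fun x hx => (hu x hx).differentiableWithinAt, by simp, ?_⟩
  refine ((InnerProductSpace.toDual ℝ E).continuous.comp_continuousOn hgrad).congr fun x _ => ?_
  exact toDual_gradient.symm

end Gradient

section FiniteEnergy

variable {E : Type*} [NormedAddCommGroup E] [InnerProductSpace ℝ E] [CompleteSpace E]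
  [MeasurableSpace E] {μ : Measure E} {p : ℝ} {u w v : E → ℝ} {U : Set E}

/-- The class `C¹(U) ∩ C(closure U)` with finite `p`-Dirichlet energy, which stands in for the
Sobolev space `W^{1,p}(U)`. -/
structure FiniteEnergyOn (p : ℝ) (u : E → ℝ) (U : Set E) (μ : Measure E) : Prop where
  contDiffOn : ContDiffOn ℝ 1 u U
  continuousOn : ContinuousOn u (closure U)
  integrableOn : IntegrableOn (fun x => ‖gradient u x‖ ^ p) U μ

namespace FiniteEnergyOn

lemma differentiableAt (hu : FiniteEnergyOn p u U μ) (hU : IsOpen U) {x : E} (hx : x ∈ U) :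
    DifferentiableAt ℝ u x :=
  (hu.contDiffOn.differentiableOn one_ne_zero).differentiableAt (hU.mem_nhds hx)

lemma continuousOn_gradient (hu : FiniteEnergyOn p u U μ) (hU : IsOpen U) :
    ContinuousOn (gradient u) U :=
  (InnerProductSpace.toDual ℝ E).symm.continuous.comp_continuousOn
    (hu.contDiffOn.continuousOn_fderiv_of_isOpen hU le_rfl)

lemma sub [OpensMeasurableSpace E] [SecondCountableTopology E] (hU : IsOpen U) (hp : 2 ≤ p)
    (hu : FiniteEnergyOn p u U μ) (hw : FiniteEnergyOn p w U μ) :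
    FiniteEnergyOn p (u - w) U μ where
  contDiffOn := hu.contDiffOn.sub hw.contDiffOn
  continuousOn := hu.continuousOn.sub hw.continuousOn
  integrableOn := by
    have hgrad : EqOn (fun x => ‖gradient (u - w) x‖ ^ p)
        (fun x => ‖gradient u x - gradient w x‖ ^ p) U := fun x hx => by
      dsimp only
      rw [gradient_sub_eq (hu.differentiableAt hU hx) (hw.differentiableAt hU hx)]
    refine IntegrableOn.congr_fun (Integrable.mono'
      ((hu.integrableOn.add hw.integrableOn).const_mul (2 ^ (p - 1))) ?_ ?_) hgrad.symm
      hU.measurableSet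
    · exact (((hu.continuousOn_gradient hU).sub (hw.continuousOn_gradient hU)).norm.rpow_const
        fun _ _ => Or.inr (by linarith)).aestronglyMeasurable hU.measurableSet
    · refine .of_forall fun x => ?_
      rw [Real.norm_of_nonneg (by positivity)]
      exact norm_sub_rpow_le hp _ _

end FiniteEnergyOn

end FiniteEnergy

section PHarmonic

variable {E : Type*} [NormedAddCommGroup E] [InnerProductSpace ℝ E] [CompleteSpace E]

lemma fderiv_apply_rpow_smul_gradient (p : ℝ) (v w : E → ℝ) (x : E) :
    fderiv ℝ v x (‖gradient w x‖ ^ (p - 2) • gradient w x) =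
      ‖gradient w x‖ ^ (p - 2) * ⟪gradient w x, gradient v x⟫_ℝ := by
  rw [← inner_gradient_left, inner_smul_right, real_inner_comm]

variable [MeasurableSpace E] {μ : Measure E} {p : ℝ} {v w : E → ℝ} {U : Set E}

/-- `w` is a weak solution on `U` of the `p`-Laplace equation `div (‖∇w‖^(p - 2) ∇w) = 0`, tested
against smooth functions with compact support in `U`. -/
def IsPHarmonicOn (p : ℝ) (w : E → ℝ) (U : Set E) (μ : Measure E) : Prop :=
  ∀ φ : E → ℝ, ContDiff ℝ (⊤ : ℕ∞) φ → HasCompactSupport φ → tsupport φ ⊆ U →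
    ∫ x in U, ‖gradient w x‖ ^ (p - 2) * ⟪gradient w x, gradient φ x⟫_ℝ ∂μ = 0

lemma IsPHarmonicOn.weaklyDivergenceFreeOn (hw : IsPHarmonicOn p w U μ) :
    WeaklyDivergenceFreeOn (fun x => ‖gradient w x‖ ^ (p - 2) • gradient w x) U μ :=
  fun φ hφ hφc hφU => by
    simpa only [fderiv_apply_rpow_smul_gradient] using hw φ hφ hφc hφU

lemma FiniteEnergyOn.continuousOn_rpow_smul_gradient (hw : FiniteEnergyOn p w U μ) (hU : IsOpen U)
    (hp : 2 ≤ p) : ContinuousOn (fun x => ‖gradient w x‖ ^ (p - 2) • gradient w x) U :=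
  ((hw.continuousOn_gradient hU).norm.rpow_const fun _ _ => Or.inr (sub_nonneg.2 hp)).smul
    (hw.continuousOn_gradient hU)

variable [OpensMeasurableSpace E]

lemma FiniteEnergyOn.integrableOn_norm_fderiv_mul_norm (hU : IsOpen U) (hp : 2 ≤ p)
    (hv : FiniteEnergyOn p v U μ) (hw : FiniteEnergyOn p w U μ) :
    IntegrableOn (fun x => ‖fderiv ℝ v x‖ * ‖‖gradient w x‖ ^ (p - 2) • gradient w x‖) U μ := by
  refine Integrable.mono' (hv.integrableOn.add hw.integrableOn) ?_ (.of_forall fun x => ?_)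
  · exact ((hv.contDiffOn.continuousOn_fderiv_of_isOpen hU le_rfl).norm.mul
      (hw.continuousOn_rpow_smul_gradient hU hp).norm).aestronglyMeasurable hU.measurableSet
  · rw [Real.norm_of_nonneg (by positivity), norm_fderiv_eq_norm_gradient,
      norm_rpow_sub_two_smul_self (by linarith)]
    exact mul_rpow_sub_one_le_rpow_add_rpow (by linarith) (norm_nonneg _) (norm_nonneg _)

lemma FiniteEnergyOn.integrableOn_rpow_mul_inner (hU : IsOpen U) (hp : 2 ≤ p)
    (hv : FiniteEnergyOn p v U μ) (hw : FiniteEnergyOn p w U μ) :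
    IntegrableOn (fun x => ‖gradient w x‖ ^ (p - 2) * ⟪gradient w x, gradient v x⟫_ℝ) U μ := by
  simp only [← fderiv_apply_rpow_smul_gradient]
  refine Integrable.mono' (hv.integrableOn_norm_fderiv_mul_norm hU hp hw) ?_
    (.of_forall fun x => (fderiv ℝ v x).le_opNorm _)
  exact ((hv.contDiffOn.continuousOn_fderiv_of_isOpen hU le_rfl).clm_apply
    (hw.continuousOn_rpow_smul_gradient hU hp)).aestronglyMeasurable hU.measurableSet

end PHarmonic

section EnergyGap

variable {E : Type*} [NormedAddCommGroup E] [InnerProductSpace ℝ E] [FiniteDimensional ℝ E]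
  [MeasurableSpace E] [BorelSpace E] {μ : Measure E} [μ.IsAddHaarMeasure] {p : ℝ}
  {u v w : E → ℝ} {U : Set E}

lemma IsPHarmonicOn.setIntegral_eq_zero_of_frontier (hw : IsPHarmonicOn p w U μ) (hU : IsOpen U)
    (hUb : Bornology.IsBounded U) (hp : 2 ≤ p) (hwE : FiniteEnergyOn p w U μ)
    (hv : FiniteEnergyOn p v U μ) (hv0 : ∀ x ∈ frontier U, v x = 0) :
    ∫ x in U, ‖gradient w x‖ ^ (p - 2) * ⟪gradient w x, gradient v x⟫_ℝ ∂μ = 0 := by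
  simp only [← fderiv_apply_rpow_smul_gradient]
  exact hw.weaklyDivergenceFreeOn.setIntegral_eq_zero_of_frontier hU hUb
    (hwE.continuousOn_rpow_smul_gradient hU hp) hv.contDiffOn hv.continuousOn hv0
    (hv.integrableOn_norm_fderiv_mul_norm hU hp hwE)

lemma IsPHarmonicOn.setIntegral_norm_gradient_rpow_add_le (hw : IsPHarmonicOn p w U μ)
    (hU : IsOpen U) (hUb : Bornology.IsBounded U) (hp : 2 ≤ p) (hwE : FiniteEnergyOn p w U μ)
    (huE : FiniteEnergyOn p u U μ) (huw : EqOn w u (frontier U)) :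
    (∫ x in U, ‖gradient w x‖ ^ p ∂μ) + 2 ^ (1 - p) * ∫ x in U, ‖gradient (u - w) x‖ ^ p ∂μ ≤
      ∫ x in U, ‖gradient u x‖ ^ p ∂μ := by
  have hvE : FiniteEnergyOn p (u - w) U μ := huE.sub hU hp hwE
  have hfirst := (hvE.integrableOn_rpow_mul_inner hU hp hwE).const_mul p
  have hbase : IntegrableOn (fun x => ‖gradient w x‖ ^ p +
      p * (‖gradient w x‖ ^ (p - 2) * ⟪gradient w x, gradient (u - w) x⟫_ℝ)) U μ :=
    hwE.integrableOn.add hfirst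
  have hgap := hvE.integrableOn.const_mul (2 ^ (1 - p))
  have hortho := hw.setIntegral_eq_zero_of_frontier hU hUb hp hwE hvE
    fun x hx => sub_eq_zero.2 (huw hx).symm
  calc (∫ x in U, ‖gradient w x‖ ^ p ∂μ) + 2 ^ (1 - p) * ∫ x in U, ‖gradient (u - w) x‖ ^ p ∂μ
      = ∫ x in U, (‖gradient w x‖ ^ p +
          p * (‖gradient w x‖ ^ (p - 2) * ⟪gradient w x, gradient (u - w) x⟫_ℝ) +
          2 ^ (1 - p) * ‖gradient (u - w) x‖ ^ p) ∂μ := by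
        rw [integral_add hbase hgap, integral_add hwE.integrableOn hfirst,
          integral_const_mul, integral_const_mul, hortho, mul_zero, add_zero]
    _ ≤ ∫ x in U, ‖gradient u x‖ ^ p ∂μ := by
        refine setIntegral_mono_on (hbase.add hgap) huE.integrableOn
          hU.measurableSet fun x hx => ?_
        rw [gradient_sub_eq (huE.differentiableAt hU hx) (hwE.differentiableAt hU hx)]
        exact norm_rpow_add_mul_inner_sub_add_norm_sub_rpow_le hp _ _

lemma IsPHarmonicOn.setIntegral_norm_gradient_sub_rpow_le_of_energy_le
    (hw : IsPHarmonicOn p w U μ) (hU : IsOpen U) (hUb : Bornology.IsBounded U) (hp : 2 ≤ p)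
    (hwE : FiniteEnergyOn p w U μ) (huE : FiniteEnergyOn p u U μ) (huw : EqOn w u (frontier U))
    {F : ℝ → ℝ} (hF : Continuous F)
    (hle : ∫ x in U, (‖gradient u x‖ ^ p / p + F (u x)) ∂μ ≤
      ∫ x in U, (‖gradient w x‖ ^ p / p + F (w x)) ∂μ) :
    ∫ x in U, ‖gradient (u - w) x‖ ^ p ∂μ ≤
      2 ^ (p - 1) * p * ∫ x in U, (F (w x) - F (u x)) ∂μ := by
  have hFu : IntegrableOn (fun x => F (u x)) U μ :=
    integrableOn_of_continuousOn_closure hUb (hF.comp_continuousOn huE.continuousOn)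
  have hFw : IntegrableOn (fun x => F (w x)) U μ :=
    integrableOn_of_continuousOn_closure hUb (hF.comp_continuousOn hwE.continuousOn)
  have hgap := hw.setIntegral_norm_gradient_rpow_add_le hU hUb hp hwE huE huw
  rw [integral_add (huE.integrableOn.div_const p) hFu,
    integral_add (hwE.integrableOn.div_const p) hFw, integral_div, integral_div] at hle
  have hpot : 2 ^ (1 - p) * ∫ x in U, ‖gradient (u - w) x‖ ^ p ∂μ ≤
      p * ∫ x in U, (F (w x) - F (u x)) ∂μ := by
    rw [integral_sub hFw hFu, ← div_le_iff₀' (by linarith)]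
    have := div_le_div_of_nonneg_right (le_sub_iff_add_le'.2 hgap) (by linarith : (0 : ℝ) ≤ p)
    rw [sub_div] at this
    linarith
  calc ∫ x in U, ‖gradient (u - w) x‖ ^ p ∂μ
      = 2 ^ (p - 1) * (2 ^ (1 - p) * ∫ x in U, ‖gradient (u - w) x‖ ^ p ∂μ) := by
        rw [← mul_assoc, ← Real.rpow_add two_pos, sub_add_sub_cancel, sub_self, Real.rpow_zero,
          one_mul]
    _ ≤ 2 ^ (p - 1) * p * ∫ x in U, (F (w x) - F (u x)) ∂μ := by
        rw [mul_assoc]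
        gcongr

end EnergyGap

section Comparison

namespace FiniteEnergyOn

variable {E : Type*} [NormedAddCommGroup E] [InnerProductSpace ℝ E] [CompleteSpace E]
  [MeasurableSpace E] {μ : Measure E} {p q : ℝ} {v : E → ℝ} {U : Set E}

lemma integrableOn_rpow_of_le (hv : FiniteEnergyOn p v U μ) (hU : μ U ≠ ⊤) (hp : 0 < p)
    (hq : 0 ≤ q) (hqp : q ≤ p) : IntegrableOn (fun x => ‖gradient v x‖ ^ q) U μ := by
  simpa only [← Real.rpow_mul (norm_nonneg _), mul_div_cancel₀ q hp.ne'] using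
    integrableOn_rpow_of_le_one hU hv.integrableOn (fun x => by positivity)
      (div_nonneg hq hp.le) ((div_le_one hp).2 hqp)

lemma setIntegral_rpow_le_of_le (hv : FiniteEnergyOn p v U μ) (hU : μ U ≠ ⊤) (hp : 0 < p)
    (hq : 0 ≤ q) (hqp : q ≤ p) :
    ∫ x in U, ‖gradient v x‖ ^ q ∂μ ≤
      μ.real U ^ (1 - q / p) * (∫ x in U, ‖gradient v x‖ ^ p ∂μ) ^ (q / p) := by
  simpa only [← Real.rpow_mul (norm_nonneg _), mul_div_cancel₀ q hp.ne'] using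
    setIntegral_rpow_le hU hv.integrableOn (fun x => by positivity)
      (div_nonneg hq hp.le) ((div_le_one hp).2 hqp)

end FiniteEnergyOn

variable {E : Type*} [NormedAddCommGroup E] [InnerProductSpace ℝ E] [FiniteDimensional ℝ E]
  [Nontrivial E] [MeasurableSpace E] [BorelSpace E] {μ : Measure E} [μ.IsAddHaarMeasure]
  {p q a r L : ℝ} {u v w : E → ℝ} {U : Set E} {x₀ : E}

lemma FiniteEnergyOn.setIntegral_abs_le (hv : FiniteEnergyOn p v U μ) (hU : IsOpen U)
    (hUr : U ⊆ ball x₀ r) (hr : 0 ≤ r) (hp : 1 ≤ p) (hv0 : ∀ x ∈ frontier U, v x = 0) :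
    ∫ x in U, |v x| ∂μ ≤
      2 * r * (μ.real U ^ (1 - 1 / p) * (∫ x in U, ‖gradient v x‖ ^ p ∂μ) ^ (1 / p)) := by
  have hUfin : μ U ≠ ⊤ := measure_ne_top_of_subset hUr measure_ball_lt_top.ne
  have hp0 : 0 < p := by linarith
  have hgrad : IntegrableOn (fun x => ‖gradient v x‖) U μ := by
    simpa only [Real.rpow_one] using hv.integrableOn_rpow_of_le hUfin hp0 zero_le_one hp
  have hfderiv : IntegrableOn (fderiv ℝ v) U μ := by
    refine (integrable_norm_iff ((hv.contDiffOn.continuousOn_fderiv_of_isOpen hU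
      le_rfl).aestronglyMeasurable hU.measurableSet)).1 ?_
    simpa only [norm_fderiv_eq_norm_gradient, IntegrableOn] using hgrad
  calc ∫ x in U, |v x| ∂μ ≤ 2 * r * ∫ x in U, ‖gradient v x‖ ∂μ := by
        simpa only [norm_fderiv_eq_norm_gradient] using
          setIntegral_abs_le_mul_setIntegral_norm_fderiv hU hUr hr hv.contDiffOn hv.continuousOn
            hv0 hfderiv
    _ ≤ 2 * r * (μ.real U ^ (1 - 1 / p) * (∫ x in U, ‖gradient v x‖ ^ p ∂μ) ^ (1 / p)) := by
        gcongr
        simpa only [Real.rpow_one] using hv.setIntegral_rpow_le_of_le hUfin hp0 zero_le_one hp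

lemma FiniteEnergyOn.setIntegral_abs_rpow_le (hv : FiniteEnergyOn p v U μ) (hU : IsOpen U)
    (hUr : U ⊆ ball x₀ r) (hr : 0 ≤ r) (hp : 1 ≤ p) (ha : 0 ≤ a) (ha1 : a ≤ 1)
    (hv0 : ∀ x ∈ frontier U, v x = 0) :
    ∫ x in U, |v x| ^ a ∂μ ≤ (2 * r) ^ a * μ.real U ^ (1 - a / p) *
      (∫ x in U, ‖gradient v x‖ ^ p ∂μ) ^ (a / p) := by
  have hUfin : μ U ≠ ⊤ := measure_ne_top_of_subset hUr measure_ball_lt_top.ne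
  have hvint : IntegrableOn (fun x => |v x|) U μ :=
    integrableOn_of_continuousOn_closure (isBounded_ball.subset hUr) hv.continuousOn.abs
  set X := ∫ x in U, ‖gradient v x‖ ^ p ∂μ
  have hX : 0 ≤ X := integral_nonneg fun x => by positivity
  have hexp : 0 ≤ 1 - 1 / p := sub_nonneg.2 ((div_le_one (by linarith)).2 hp)
  calc ∫ x in U, |v x| ^ a ∂μ ≤ μ.real U ^ (1 - a) * (∫ x in U, |v x| ∂μ) ^ a :=
        setIntegral_rpow_le hUfin hvint (fun x => abs_nonneg _) ha ha1
    _ ≤ μ.real U ^ (1 - a) * (2 * r * (μ.real U ^ (1 - 1 / p) * X ^ (1 / p))) ^ a := by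
        gcongr
        exact hv.setIntegral_abs_le hU hUr hr hp hv0
    _ = (2 * r) ^ a * (μ.real U ^ (1 - a) * μ.real U ^ ((1 - 1 / p) * a)) * X ^ (1 / p * a) := by
        rw [Real.mul_rpow (x := 2 * r) (by positivity) (by positivity),
          Real.mul_rpow (x := μ.real U ^ _) (by positivity) (by positivity),
          ← Real.rpow_mul measureReal_nonneg, ← Real.rpow_mul hX]
        ring
    _ = (2 * r) ^ a * μ.real U ^ (1 - a / p) * X ^ (a / p) := by
        rw [← Real.rpow_add_of_nonneg measureReal_nonneg (sub_nonneg.2 ha1) (by positivity)]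
        ring_nf

lemma rpow_mul_rpow_le_of_le_mul_rpow {X V b : ℝ} (hX : 0 ≤ X) (hV : 0 ≤ V) (hb : 0 ≤ b)
    (hp : 0 < p) (hap : a < p) (hq : 0 ≤ q) (hqp : q ≤ p)
    (h : X ≤ b * V ^ (1 - a / p) * X ^ (a / p)) :
    V ^ (1 - q / p) * X ^ (q / p) ≤ V * b ^ (q / (p - a)) := by
  have hθ : a / p < 1 := (div_lt_one hp).2 hap
  have hq1 : q / p ≤ 1 := (div_le_one hp).2 hqp
  have hXV : X ≤ b ^ (1 - a / p)⁻¹ * V := by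
    have := le_rpow_inv_of_le_mul_rpow hX (by positivity) hθ h
    rwa [Real.mul_rpow hb (by positivity), Real.rpow_rpow_inv hV (sub_pos.2 hθ).ne'] at this
  have hexp : (1 - a / p)⁻¹ * (q / p) = q / (p - a) := by
    have : p - a ≠ 0 := (sub_pos.2 hap).ne'
    field_simp
  calc V ^ (1 - q / p) * X ^ (q / p) ≤ V ^ (1 - q / p) * (b ^ (1 - a / p)⁻¹ * V) ^ (q / p) := by
        gcongr
    _ = V ^ (1 - q / p) * V ^ (q / p) * b ^ (q / (p - a)) := by
        rw [Real.mul_rpow (by positivity) hV, ← Real.rpow_mul hb, hexp]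
        ring
    _ = V * b ^ (q / (p - a)) := by
        rw [← Real.rpow_add_of_nonneg hV (sub_nonneg.2 hq1) (by positivity), sub_add_cancel,
          Real.rpow_one]

lemma IsPHarmonicOn.setIntegral_norm_gradient_sub_rpow_le (hw : IsPHarmonicOn p w U μ)
    (hU : IsOpen U) (hUr : U ⊆ ball x₀ r) (hr : 0 ≤ r) (hp : 2 ≤ p) (hq : 0 ≤ q) (hqp : q ≤ p)
    (ha : 0 ≤ a) (ha1 : a ≤ 1) (hL : 0 ≤ L) (hwE : FiniteEnergyOn p w U μ)
    (huE : FiniteEnergyOn p u U μ) (huw : EqOn w u (frontier U)) {F : ℝ → ℝ} (hF : Continuous F)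
    (hFL : ∀ x ∈ U, |F (w x) - F (u x)| ≤ L * |w x - u x| ^ a)
    (hle : ∫ x in U, (‖gradient u x‖ ^ p / p + F (u x)) ∂μ ≤
      ∫ x in U, (‖gradient w x‖ ^ p / p + F (w x)) ∂μ) :
    ∫ x in U, ‖gradient (u - w) x‖ ^ q ∂μ ≤
      μ.real U * (2 ^ (p - 1) * p * L * (2 * r) ^ a) ^ (q / (p - a)) := by
  have hUb : Bornology.IsBounded U := isBounded_ball.subset hUr
  have hUfin : μ U ≠ ⊤ := measure_ne_top_of_subset hUr measure_ball_lt_top.ne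
  have hvE : FiniteEnergyOn p (u - w) U μ := huE.sub hU hp hwE
  have hp0 : 0 < p := by linarith
  have hpot : ∫ x in U, (F (w x) - F (u x)) ∂μ ≤ L * ∫ x in U, |(u - w) x| ^ a ∂μ := by
    rw [← integral_const_mul]
    refine setIntegral_mono_on ?_ ?_ hU.measurableSet fun x hx => ?_
    · exact integrableOn_of_continuousOn_closure hUb
        ((hF.comp_continuousOn hwE.continuousOn).sub (hF.comp_continuousOn huE.continuousOn))
    · exact integrableOn_of_continuousOn_closure hUb
        (continuousOn_const.mul (hvE.continuousOn.abs.rpow_const fun _ _ => Or.inr ha))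
    · rw [Pi.sub_apply, abs_sub_comm]
      exact (le_abs_self _).trans (hFL x hx)
  refine (hvE.setIntegral_rpow_le_of_le hUfin hp0 hq hqp).trans
    (rpow_mul_rpow_le_of_le_mul_rpow (integral_nonneg fun x => by positivity) measureReal_nonneg
      (by positivity) hp0 (by linarith) hq hqp ?_)
  calc ∫ x in U, ‖gradient (u - w) x‖ ^ p ∂μ
      ≤ 2 ^ (p - 1) * p * ∫ x in U, (F (w x) - F (u x)) ∂μ :=
        hw.setIntegral_norm_gradient_sub_rpow_le_of_energy_le hU hUb hp hwE huE huw hF hle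
    _ ≤ 2 ^ (p - 1) * p * (L * ((2 * r) ^ a * μ.real U ^ (1 - a / p) *
          (∫ x in U, ‖gradient (u - w) x‖ ^ p ∂μ) ^ (a / p))) := by
        gcongr
        refine hpot.trans ?_
        gcongr
        exact hvE.setIntegral_abs_rpow_le hU hUr hr (by linarith) ha ha1
          fun x hx => sub_eq_zero.2 (huw hx).symm
    _ = 2 ^ (p - 1) * p * L * (2 * r) ^ a * μ.real U ^ (1 - a / p) *
          (∫ x in U, ‖gradient (u - w) x‖ ^ p ∂μ) ^ (a / p) := by ring

end Comparison

lemma addHaar_real_ball_eq_mul_rpow {E : Type*} [NormedAddCommGroup E] [NormedSpace ℝ E]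
    [FiniteDimensional ℝ E] [MeasurableSpace E] [BorelSpace E] (μ : Measure E)
    [μ.IsAddHaarMeasure] (x₀ : E) {r : ℝ} (hr : 0 < r) :
    μ.real (ball x₀ r) = μ.real (ball (0 : E) 1) * r ^ (Module.finrank ℝ E : ℝ) := by
  rw [Measure.real, Measure.addHaar_ball_of_pos _ _ hr, ENNReal.toReal_mul,
    ENNReal.toReal_ofReal (by positivity), Real.rpow_natCast, mul_comm, Measure.real]

lemma abs_le_of_sSup_abs_image_le {X : Type*} [PseudoMetricSpace X] [ProperSpace X] {U : Set X}
    {u w : X → ℝ} {M : ℝ} (hU : Bornology.IsBounded U) (hw : ContinuousOn w (closure U))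
    (hu : ∀ x ∈ U, |u x| ≤ M)
    (hsup : sSup ((fun x => |w x|) '' U) ≤ sSup ((fun x => |u x|) '' U)) {x : X} (hx : x ∈ U) :
    |w x| ≤ M := by
  have hbdd : BddAbove ((fun x => |w x|) '' U) :=
    (hU.isCompact_closure.bddAbove_image hw.abs).mono (image_mono subset_closure)
  calc |w x| ≤ sSup ((fun x => |w x|) '' U) := le_csSup hbdd (mem_image_of_mem _ hx)
    _ ≤ sSup ((fun x => |u x|) '' U) := hsup
    _ ≤ M := csSup_le ((nonempty_of_mem hx).image _) (forall_mem_image.2 hu)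

lemma APLocMin.finiteEnergyOn {N : ℕ} {p : ℝ} {F : ℝ → ℝ} {Ω U : Set (EuclideanSpace ℝ (Fin N))}
    {u : EuclideanSpace ℝ (Fin N) → ℝ} (hu : APLocMin N p F Ω u) (hU : IsOpen U)
    (hUΩ : closure U ⊆ Ω) : FiniteEnergyOn p u U volume where
  contDiffOn := contDiffOn_one_of_continuousOn_gradient hU
    (fun x hx => hu.1 x (hUΩ (subset_closure hx))) (hu.2.1.mono (subset_closure.trans hUΩ))
  continuousOn := fun x hx => (hu.1 x (hUΩ hx)).continuousAt.continuousWithinAt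
  integrableOn := hu.2.2.1.mono_set (subset_closure.trans hUΩ)

section Main

variable {E : Type*} [NormedAddCommGroup E] [InnerProductSpace ℝ E] [FiniteDimensional ℝ E]
  [Nontrivial E] [MeasurableSpace E] [BorelSpace E] {p q : ℝ}

lemma IsPHarmonicOn.setIntegral_ball_norm_gradient_sub_rpow_le {μ : Measure E}
    [μ.IsAddHaarMeasure] {a L R : ℝ} {F : ℝ → ℝ} {u w : E → ℝ} {x₀ : E}
    (hw : IsPHarmonicOn p w (ball x₀ (2 * R)) μ) (hR : 0 < R) (hp : 2 ≤ p) (hq : 0 ≤ q)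
    (hqp : q ≤ p) (ha : 0 ≤ a) (ha1 : a ≤ 1) (hL : 0 ≤ L)
    (hwE : FiniteEnergyOn p w (ball x₀ (2 * R)) μ)
    (huE : FiniteEnergyOn p u (ball x₀ (2 * R)) μ) (huw : EqOn w u (sphere x₀ (2 * R)))
    (hF : Continuous F)
    (hFL : ∀ x ∈ ball x₀ (2 * R), |F (w x) - F (u x)| ≤ L * |w x - u x| ^ a)
    (hle : ∫ x in ball x₀ (2 * R), (‖gradient u x‖ ^ p / p + F (u x)) ∂μ ≤
      ∫ x in ball x₀ (2 * R), (‖gradient w x‖ ^ p / p + F (w x)) ∂μ) :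
    ∫ x in ball x₀ R, ‖gradient u x - gradient w x‖ ^ q ∂μ ≤
      μ.real (ball (0 : E) 1) * 2 ^ (Module.finrank ℝ E : ℝ) *
          (2 ^ (p - 1) * p * L * 4 ^ a) ^ (q / (p - a)) *
        R ^ (Module.finrank ℝ E + q * a / (p - a)) := by
  have hsub : ball x₀ R ⊆ ball x₀ (2 * R) := ball_subset_ball (by linarith)
  calc ∫ x in ball x₀ R, ‖gradient u x - gradient w x‖ ^ q ∂μ
      = ∫ x in ball x₀ R, ‖gradient (u - w) x‖ ^ q ∂μ :=
        setIntegral_congr_fun measurableSet_ball fun x hx => by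
          rw [gradient_sub_eq (huE.differentiableAt isOpen_ball (hsub hx))
            (hwE.differentiableAt isOpen_ball (hsub hx))]
    _ ≤ ∫ x in ball x₀ (2 * R), ‖gradient (u - w) x‖ ^ q ∂μ :=
        setIntegral_mono_set ((huE.sub isOpen_ball hp hwE).integrableOn_rpow_of_le
          measure_ball_lt_top.ne (by linarith) hq hqp)
          (.of_forall fun x => Real.rpow_nonneg (norm_nonneg _) q) hsub.eventuallyLE
    _ ≤ μ.real (ball x₀ (2 * R)) *
          (2 ^ (p - 1) * p * L * (2 * (2 * R)) ^ a) ^ (q / (p - a)) :=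
        hw.setIntegral_norm_gradient_sub_rpow_le isOpen_ball subset_rfl (by positivity) hp hq hqp
          ha ha1 hL hwE huE (huw.mono frontier_ball_subset_sphere) hF hFL hle
    _ = _ := by
        rw [addHaar_real_ball_eq_mul_rpow μ x₀ (by positivity), ← mul_assoc 2 2 R,
          Real.mul_rpow (by norm_num) hR.le, Real.mul_rpow (by norm_num) hR.le,
          ← mul_assoc _ _ (R ^ a), Real.mul_rpow (by positivity) (by positivity),
          ← Real.rpow_mul hR.le, Real.rpow_add hR]
        ring_nf

theorem stmt11_general (μ : Measure E) [μ.IsAddHaarMeasure] {γ lp lm δ₀ : ℝ} (M : ℝ)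
    (hp : 2 ≤ p) (hq : 0 ≤ q) (hqp : q ≤ p) (hγ : 0 < γ) (hlp : 0 < lp) (hlm : 0 < lm)
    (hδ₀ : 0 < δ₀) :
    ∃ C : ℝ, 0 < C ∧ ∀ δ : ℝ, 0 ≤ δ → δ ≤ δ₀ → ∀ (u w : E → ℝ) (x₀ : E) (R : ℝ), 0 < R →
      FiniteEnergyOn p u (ball x₀ (2 * R)) μ → FiniteEnergyOn p w (ball x₀ (2 * R)) μ →
      (∀ x ∈ ball x₀ (2 * R), |u x| ≤ M) → (∀ x ∈ ball x₀ (2 * R), |w x| ≤ M) →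
      IsPHarmonicOn p w (ball x₀ (2 * R)) μ → EqOn w u (sphere x₀ (2 * R)) →
      ∫ x in ball x₀ (2 * R), (‖gradient u x‖ ^ p / p + δ * Fgam γ lp lm (u x)) ∂μ ≤
        ∫ x in ball x₀ (2 * R), (‖gradient w x‖ ^ p / p + δ * Fgam γ lp lm (w x)) ∂μ →
      ∫ x in ball x₀ R, ‖gradient u x - gradient w x‖ ^ q ∂μ ≤
        C * R ^ (Module.finrank ℝ E + q * min γ 1 / (p - min γ 1)) := by
  set L := δ₀ * ((lp + lm) * max 1 (γ * M ^ (γ - 1)))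
  have hL : 0 < L := by positivity
  have hball : 0 < μ.real (ball (0 : E) 1) :=
    ENNReal.toReal_pos (measure_ball_pos _ _ one_pos).ne' measure_ball_lt_top.ne
  refine ⟨μ.real (ball (0 : E) 1) * 2 ^ (Module.finrank ℝ E : ℝ) *
    (2 ^ (p - 1) * p * L * 4 ^ min γ 1) ^ (q / (p - min γ 1)), by positivity, ?_⟩
  intro δ hδ hδδ₀ u w x₀ R hR huE hwE huM hwM hw huw hle
  refine hw.setIntegral_ball_norm_gradient_sub_rpow_le (F := fun t => δ * Fgam γ lp lm t) hR hp hq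
    hqp (le_min hγ.le zero_le_one) (min_le_right γ 1) hL.le hwE huE huw
    (continuous_const.mul (continuous_Fgam hγ.le)) (fun x hx => ?_) hle
  rw [← mul_sub, abs_mul, abs_of_nonneg hδ, mul_assoc δ₀]
  gcongr
  exact abs_Fgam_sub_Fgam_le hγ.le hlp.le hlm.le (hwM x hx) (huM x hx)

end Main

/-- Comparison estimate with the `p`-harmonic replacement `w` of a local minimizer of
`J_δ` in the degenerate regime `2 ≤ p`. -/
theorem stmt11 (N : ℕ) (hN : 1 ≤ N) (p γ lp lm δ₀ M : ℝ)
    (hp : 2 ≤ p) (hγ0 : 0 < γ) (hγp : γ < p) (hlp : 0 < lp) (hlm : 0 < lm)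
    (hδ₀ : 0 < δ₀) (hM : 0 < M) :
    ∃ C : ℝ, 0 < C ∧
      ∀ (Ω : Set (EuclideanSpace ℝ (Fin N))), IsOpen Ω → Bornology.IsBounded Ω →
      ∀ δ : ℝ, 0 ≤ δ → δ ≤ δ₀ →
      ∀ u : EuclideanSpace ℝ (Fin N) → ℝ,
        APLocMin N p (fun t => δ * Fgam γ lp lm t) Ω u →
      ∀ (x₀ : EuclideanSpace ℝ (Fin N)) (R : ℝ), 0 < R →
        closure (Metric.ball x₀ (4 * R)) ⊆ Ω →
        (∀ x ∈ Metric.ball x₀ (4 * R), |u x| ≤ M) →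
      ∀ w : EuclideanSpace ℝ (Fin N) → ℝ,
        (∀ x ∈ Metric.ball x₀ (2 * R), DifferentiableAt ℝ w x) →
        ContinuousOn (fun x => gradient w x) (Metric.ball x₀ (2 * R)) →
        ContinuousOn w (closure (Metric.ball x₀ (2 * R))) →
        (∀ φ : EuclideanSpace ℝ (Fin N) → ℝ, ContDiff ℝ (⊤ : ℕ∞) φ → HasCompactSupport φ →
          tsupport φ ⊆ Metric.ball x₀ (2 * R) →
          (∫ x in Metric.ball x₀ (2 * R),
            ‖gradient w x‖ ^ (p - 2) * ⟪gradient w x, gradient φ x⟫_ℝ) = 0) →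
        Set.EqOn w u (Metric.sphere x₀ (2 * R)) →
        sSup ((fun x => |w x|) '' Metric.ball x₀ (2 * R)) ≤
          sSup ((fun x => |u x|) '' Metric.ball x₀ (2 * R)) →
        IntegrableOn (fun x => ‖gradient w x‖ ^ p) (Metric.ball x₀ (2 * R)) volume →
        (∫ x in Metric.ball x₀ (2 * R), ‖gradient w x‖ ^ p) ≤
          (∫ x in Metric.ball x₀ (2 * R), ‖gradient u x‖ ^ p) →
        (∫ x in Metric.ball x₀ (2 * R),
            (‖gradient u x‖ ^ p / p + δ * Fgam γ lp lm (u x))) ≤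
          (∫ x in Metric.ball x₀ (2 * R),
            (‖gradient w x‖ ^ p / p + δ * Fgam γ lp lm (w x))) →
        ((γ ≤ 1 →
            (∫ x in Metric.ball x₀ R, ‖gradient u x - gradient w x‖ ^ (2 : ℝ)) ≤
              C * R ^ ((N : ℝ) + 2 * γ / (p - γ))) ∧
          (1 ≤ γ →
            (∫ x in Metric.ball x₀ R, ‖gradient u x - gradient w x‖ ^ (2 : ℝ)) ≤
              C * R ^ ((N : ℝ) + 2 / (p - 1)))) := by
  have : Nonempty (Fin N) := ⟨⟨0, hN⟩⟩
  obtain ⟨C, hC, H⟩ := stmt11_general (E := EuclideanSpace ℝ (Fin N)) volume M hp zero_le_two hp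
    hγ0 hlp hlm hδ₀
  refine ⟨C, hC, fun Ω _ _ δ hδ hδδ₀ u hu x₀ R hR hsub huM w hw hgrad hwc hharm hbd hsup hinteg _
    hle => ?_⟩
  have hball : ball x₀ (2 * R) ⊆ ball x₀ (4 * R) := ball_subset_ball (by linarith)
  have huM' : ∀ x ∈ ball x₀ (2 * R), |u x| ≤ M := fun x hx => huM x (hball hx)
  have key := H δ hδ hδδ₀ u w x₀ R hR
    (hu.finiteEnergyOn isOpen_ball ((closure_mono hball).trans hsub))
    ⟨contDiffOn_one_of_continuousOn_gradient isOpen_ball hw hgrad, hwc, hinteg⟩ huM'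
    (fun _ => abs_le_of_sSup_abs_image_le isBounded_ball hwc huM' hsup) hharm hbd hle
  rw [finrank_euclideanSpace_fin] at key
  refine ⟨fun hγ => ?_, fun hγ => ?_⟩
  · rwa [min_eq_left hγ] at key
  · rwa [min_eq_right hγ, mul_one] at key
end
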